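/- For critical site percolation on the triangular lattice, the cylinder point-to-point first-passage time t_{0,n} does not satisfy a strong law: it is NOT the case that t_{0,n}/log n → √3/π almost surely; that is, P({ω : lim_{n→∞} t_{0,n}(ω)/log n = √3/π}) < 1. -/

import Mathlib

open MeasureTheory Filter Topology

noncomputable section

/-- The triangular lattice vertex `x + y·e^{iπ/3} ∈ ℂ` associated to `(x, y) ∈ ℤ × ℤ`. -/
def triVertex (p : ℤ × ℤ) : ℂ :=
  (p.1 : ℂ) + (p.2 : ℂ) * Complex.exp (((Real.pi / 3 : ℝ) : ℂ) * Complex.I)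

/-- Adjacency in the triangular lattice: Euclidean distance one. -/
def triAdj (u v : ℤ × ℤ) : Prop := dist (triVertex u) (triVertex v) = 1

/-- A percolation configuration: `true` = yellow (passage time 1), `false` = blue (0). -/
abbrev Config := (ℤ × ℤ) → Bool

/-- The passage time `t(v)` of a site. -/
def siteTime (ω : Config) (v : ℤ × ℤ) : ℕ := if ω v then 1 else 0

/-- The passage time `T(γ)` of a path: sum of the `t(v)` over its vertices. -/
def pathTime (ω : Config) (γ : List (ℤ × ℤ)) : ℕ := (γ.map (siteTime ω)).sum

/-- A path: a nonempty list of distinct vertices, consecutive ones adjacent. -/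
def IsPath (γ : List (ℤ × ℤ)) : Prop := γ ≠ [] ∧ γ.Nodup ∧ γ.Chain' triAdj

/-- The (closed) hexagon of a vertex: its Voronoi cell with respect to the lattice. -/
def hexCell (v : ℤ × ℤ) : Set ℂ :=
  {z | ∀ w : ℤ × ℤ, dist z (triVertex v) ≤ dist z (triVertex w)}

/-- `P` is the i.i.d. Bernoulli(1/2) site percolation measure: every finite cylinder
event has probability `2^{-#sites}`. -/
def IsBernoulliHalf (P : Measure Config) : Prop :=
  IsProbabilityMeasure P ∧
    ∀ (s : Finset (ℤ × ℤ)) (f : (ℤ × ℤ) → Bool),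
      P {ω : Config | ∀ v ∈ s, ω v = f v} = (1 / 2 : ENNReal) ^ s.card

/-- `t_{0,n}`: the cylinder point-to-point first-passage time, over paths from the
vertex `0` to the vertex `i√3·n` which, except for their endpoints, lie strictly
between the hyperplanes `H_0` and `H_n`. -/
def tCyl (ω : Config) (n : ℕ) : ℕ :=
  sInf {m | ∃ γ : List (ℤ × ℤ), IsPath γ ∧ γ.head? = some (0, 0) ∧
    (∃ u, γ.getLast? = some u ∧ triVertex u = (Real.sqrt 3 * n : ℝ) * Complex.I) ∧
    (∀ v ∈ (γ.drop 1).dropLast,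
      0 < (triVertex v).im ∧ (triVertex v).im < Real.sqrt 3 * n) ∧
    pathTime ω γ = m}

/-! ### The triangular lattice as a graph on `ℤ × ℤ` -/

/-- The triangular lattice in the coordinates `(x, y) ↦ x + y·e^{iπ/3}`. -/
def triGraph : SimpleGraph (ℤ × ℤ) where
  Adj u v := (v.1 = u.1 + 1 ∧ v.2 = u.2) ∨ (v.1 = u.1 - 1 ∧ v.2 = u.2) ∨
    (v.1 = u.1 ∧ v.2 = u.2 + 1) ∨ (v.1 = u.1 ∧ v.2 = u.2 - 1) ∨
    (v.1 = u.1 + 1 ∧ v.2 = u.2 - 1) ∨ (v.1 = u.1 - 1 ∧ v.2 = u.2 + 1)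
  symm := ⟨fun u v h => by omega⟩
  loopless := ⟨fun u h => by omega⟩

theorem triGraph_adj {u v : ℤ × ℤ} : triGraph.Adj u v ↔
    (v.1 = u.1 + 1 ∧ v.2 = u.2) ∨ (v.1 = u.1 - 1 ∧ v.2 = u.2) ∨
    (v.1 = u.1 ∧ v.2 = u.2 + 1) ∨ (v.1 = u.1 ∧ v.2 = u.2 - 1) ∨
    (v.1 = u.1 + 1 ∧ v.2 = u.2 - 1) ∨ (v.1 = u.1 - 1 ∧ v.2 = u.2 + 1) := Iff.rfl

theorem triVertex_re (u : ℤ × ℤ) : (triVertex u).re = u.1 + u.2 / 2 := by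
  simp [triVertex, Complex.exp_re, Complex.exp_im]
  ring

theorem triVertex_im (u : ℤ × ℤ) : (triVertex u).im = u.2 * (√3 / 2) := by
  simp [triVertex, Complex.exp_re, Complex.exp_im]

theorem triAdj_iff {u v : ℤ × ℤ} : triAdj u v ↔ triGraph.Adj u v := by
  have h3 : (√3 : ℝ) ^ 2 = 3 := Real.sq_sqrt (by norm_num)
  have key : dist (triVertex u) (triVertex v) ^ 2 =
      (((v.1 - u.1) ^ 2 + (v.1 - u.1) * (v.2 - u.2) + (v.2 - u.2) ^ 2 : ℤ) : ℝ) := by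
    rw [Complex.dist_eq, Complex.sq_norm, Complex.normSq_apply, Complex.sub_re, Complex.sub_im,
      triVertex_re, triVertex_re, triVertex_im, triVertex_im]
    push_cast
    linear_combination (((u.2 : ℝ) - v.2) ^ 2 / 4) * h3
  have h1 : triAdj u v ↔
      (v.1 - u.1) ^ 2 + (v.1 - u.1) * (v.2 - u.2) + (v.2 - u.2) ^ 2 = 1 := by
    unfold triAdj
    rw [← sq_eq_sq₀ dist_nonneg zero_le_one, key]
    norm_cast
  rw [h1, triGraph_adj]
  generalize hx : v.1 - u.1 = x
  generalize hy : v.2 - u.2 = y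
  constructor
  · intro h
    have hx1 : x ^ 2 ≤ 1 := by nlinarith [sq_nonneg (x + 2 * y)]
    have hy1 : y ^ 2 ≤ 1 := by nlinarith [sq_nonneg (2 * x + y)]
    have : x ≤ 1 := by nlinarith
    have : -1 ≤ x := by nlinarith
    have : y ≤ 1 := by nlinarith
    have : -1 ≤ y := by nlinarith
    interval_cases x <;> interval_cases y <;> simp_all <;> omega
  · intro h
    obtain ⟨h, h'⟩ | ⟨h, h'⟩ | ⟨h, h'⟩ | ⟨h, h'⟩ | ⟨h, h'⟩ | ⟨h, h'⟩ := h
    · obtain ⟨rfl, rfl⟩ : x = 1 ∧ y = 0 := by omega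
      norm_num
    · obtain ⟨rfl, rfl⟩ : x = -1 ∧ y = 0 := by omega
      norm_num
    · obtain ⟨rfl, rfl⟩ : x = 0 ∧ y = 1 := by omega
      norm_num
    · obtain ⟨rfl, rfl⟩ : x = 0 ∧ y = -1 := by omega
      norm_num
    · obtain ⟨rfl, rfl⟩ : x = 1 ∧ y = -1 := by omega
      norm_num
    · obtain ⟨rfl, rfl⟩ : x = -1 ∧ y = 1 := by omega
      norm_num

/-- `u` and `v` are joined by a walk inside `R` of passage time at most `k`. -/
def Reach (ω : Config) (R : Set (ℤ × ℤ)) (k : ℕ) (u v : ℤ × ℤ) : Prop :=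
  ∃ w : triGraph.Walk u v, (∀ z ∈ w.support, z ∈ R) ∧ pathTime ω w.support ≤ k

theorem pathTime_cons (ω : Config) (v : ℤ × ℤ) (l : List (ℤ × ℤ)) :
    pathTime ω (v :: l) = siteTime ω v + pathTime ω l := by
  simp [pathTime]

theorem pathTime_append (ω : Config) (l l' : List (ℤ × ℤ)) :
    pathTime ω (l ++ l') = pathTime ω l + pathTime ω l' := by
  simp [pathTime]

theorem pathTime_sublist (ω : Config) {l l' : List (ℤ × ℤ)} (h : l.Sublist l') :
    pathTime ω l ≤ pathTime ω l' :=
  (h.map _).sum_le_sum (fun _ _ => Nat.zero_le _)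

theorem siteTime_le_one (ω : Config) (v : ℤ × ℤ) : siteTime ω v ≤ 1 := by
  unfold siteTime; split <;> simp

theorem pathTime_support_append (ω : Config) {u v x : ℤ × ℤ} (p : triGraph.Walk u v)
    (q : triGraph.Walk v x) :
    pathTime ω (p.append q).support + siteTime ω v =
      pathTime ω p.support + pathTime ω q.support := by
  rw [SimpleGraph.Walk.support_append, pathTime_append]
  conv_rhs => rw [← SimpleGraph.Walk.cons_tail_support q, pathTime_cons]
  ring

theorem siteTime_le_pathTime (ω : Config) {v : ℤ × ℤ} {l : List (ℤ × ℤ)} (h : v ∈ l) :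
    siteTime ω v ≤ pathTime ω l :=
  List.single_le_sum (by simp) _ (List.mem_map_of_mem h)

variable {ω : Config} {R R' : Set (ℤ × ℤ)} {k l : ℕ} {u v z : ℤ × ℤ}

theorem Reach.mono (h : Reach ω R k u v) (hR : R ⊆ R') (hk : k ≤ l) : Reach ω R' l u v := by
  obtain ⟨w, h1, h2⟩ := h
  exact ⟨w, fun z hz => hR (h1 z hz), h2.trans hk⟩

theorem Reach.right_mem (h : Reach ω R k u v) : v ∈ R := by
  obtain ⟨w, h1, h2⟩ := h
  exact h1 _ w.end_mem_support

theorem Reach.left_time (h : Reach ω R k u v) : siteTime ω u ≤ k := by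
  obtain ⟨w, h1, h2⟩ := h
  exact (siteTime_le_pathTime ω w.start_mem_support).trans h2

theorem Reach.refl (hu : u ∈ R) (hk : siteTime ω u ≤ k) : Reach ω R k u u :=
  ⟨.nil, by simpa using hu, by simpa [pathTime] using hk⟩

theorem Reach.symm (h : Reach ω R k u v) : Reach ω R k v u := by
  obtain ⟨w, h1, h2⟩ := h
  refine ⟨w.reverse, by simpa using h1, ?_⟩
  simpa [pathTime, List.map_reverse, List.sum_reverse] using h2

theorem Reach.trans (h : Reach ω R k u v) (h' : Reach ω R l v z) : Reach ω R (k + l) u z := by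
  obtain ⟨w, h1, h2⟩ := h
  obtain ⟨w', h1', h2'⟩ := h'
  refine ⟨w.append w', ?_, ?_⟩
  · intro y hy
    rw [SimpleGraph.Walk.mem_support_append_iff] at hy
    exact hy.elim (h1 y) (h1' y)
  · have := pathTime_support_append ω w w'
    omega

theorem Reach.cons (h : triGraph.Adj u v) (hu : u ∈ R) (h' : Reach ω R l v z) :
    Reach ω R (siteTime ω u + l) u z := by
  obtain ⟨w', h1', h2'⟩ := h'
  refine ⟨.cons h w', ?_, ?_⟩
  · intro y hy
    rw [SimpleGraph.Walk.support_cons, List.mem_cons] at hy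
    rcases hy with rfl | hy
    exacts [hu, h1' y hy]
  · rw [SimpleGraph.Walk.support_cons, pathTime_cons]
    omega

theorem Reach.snoc (h' : Reach ω R l u v) (h : triGraph.Adj v z) (hu : z ∈ R) :
    Reach ω R (siteTime ω z + l) u z :=
  (Reach.cons h.symm hu h'.symm).symm

/-- Restriction of a walk to an initial and a final part. -/
theorem walk_split (ω : Config) (w : triGraph.Walk u v) (hz : z ∈ w.support) :
    ∃ (p : triGraph.Walk u z) (q : triGraph.Walk z v),
      (∀ y ∈ p.support, y ∈ w.support) ∧ (∀ y ∈ q.support, y ∈ w.support) ∧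
      pathTime ω p.support + pathTime ω q.support = pathTime ω w.support + siteTime ω z := by
  refine ⟨w.takeUntil z hz, w.dropUntil z hz, fun y hy => w.support_takeUntil_subset_support hz hy,
    fun y hy => w.support_dropUntil_subset_support hz hy, ?_⟩
  rw [← pathTime_support_append, SimpleGraph.Walk.take_spec]

/-- First entrance of a walk into a set. -/
theorem walk_first_hit (ω : Config) (Q : ℤ × ℤ → Prop) (w : triGraph.Walk u v)
    (hu : ¬ Q u) (hv : Q v) :
    ∃ (a b : ℤ × ℤ) (p : triGraph.Walk u a) (q : triGraph.Walk b v), triGraph.Adj a b ∧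
      Q b ∧ (∀ y ∈ p.support, y ∈ w.support ∧ ¬ Q y) ∧ (∀ y ∈ q.support, y ∈ w.support) ∧
      pathTime ω p.support + pathTime ω q.support = pathTime ω w.support := by
  induction w with
  | nil => exact absurd hv hu
  | @cons u c v h w ih =>
    by_cases hc : Q c
    · refine ⟨u, c, .nil, w, h, hc, ?_, ?_, ?_⟩
      · intro y hy
        simp at hy
        subst hy
        simp [hu]
      · intro y hy; simp [hy]
      · simp [pathTime]
    · obtain ⟨a, b, p, q, hab, hb, hp, hq, hpq⟩ := ih hc hv
      refine ⟨a, b, .cons h p, q, hab, hb, ?_, ?_, ?_⟩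
      · intro y hy
        rw [SimpleGraph.Walk.support_cons, List.mem_cons] at hy
        rcases hy with rfl | hy
        · simp [hu]
        · simp [hp y hy]
      · intro y hy; simp [hq y hy]
      · rw [SimpleGraph.Walk.support_cons, pathTime_cons, SimpleGraph.Walk.support_cons,
          pathTime_cons]
        omega

theorem Reach.first_hit (Q : ℤ × ℤ → Prop) (h : Reach ω R k u v) (hu : ¬ Q u) (hv : Q v) :
    ∃ (a b : ℤ × ℤ) (i j : ℕ), triGraph.Adj a b ∧ Q b ∧ b ∈ R ∧ i + j ≤ k ∧
      Reach ω {y | y ∈ R ∧ ¬ Q y} i u a ∧ Reach ω R j b v := by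
  obtain ⟨w, h1, h2⟩ := h
  obtain ⟨a, b, p, q, hab, hb, hp, hq, hpq⟩ := walk_first_hit ω Q w hu hv
  exact ⟨a, b, _, _, hab, hb, h1 _ (hq _ q.start_mem_support), hpq.trans_le h2,
    ⟨p, fun y hy => ⟨h1 _ (hp y hy).1, (hp y hy).2⟩, le_rfl⟩,
    ⟨q, fun y hy => h1 _ (hq y hy), le_rfl⟩⟩

/-- Image of a walk under a lattice symmetry. -/
theorem Reach.map {f : ℤ × ℤ → ℤ × ℤ} (hf : ∀ a b, triGraph.Adj a b → triGraph.Adj (f a) (f b))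
    (h : Reach (fun v => ω (f v)) R k u v) (hR : ∀ z ∈ R, f z ∈ R') :
    Reach ω R' k (f u) (f v) := by
  obtain ⟨w, h1, h2⟩ := h
  let F : triGraph →g triGraph := ⟨f, fun {a b} => hf a b⟩
  refine ⟨w.map F, ?_, ?_⟩
  · intro z hz
    rw [SimpleGraph.Walk.support_map, List.mem_map] at hz
    obtain ⟨y, hy, rfl⟩ := hz
    exact hR _ (h1 y hy)
  · rw [SimpleGraph.Walk.support_map]
    rw [pathTime, List.map_map]; exact h2

/-- Walks along a ray, ignoring passage times. -/
theorem exists_ray (d e : ℤ) (hd : ∀ a b : ℤ, triGraph.Adj (a, b) (a + d, b + e)) (a b : ℤ)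
    (m : ℕ) : ∃ w : triGraph.Walk (a, b) (a + m * d, b + m * e),
      ∀ z ∈ w.support, ∃ i ≤ m, z = (a + i * d, b + i * e) := by
  induction m with
  | zero => exact ⟨SimpleGraph.Walk.nil.copy rfl (by simp), by simp⟩
  | succ m ih =>
    obtain ⟨w, hw⟩ := ih
    have h : triGraph.Adj (a + m * d, b + m * e) (a + (m + 1 : ℕ) * d, b + (m + 1 : ℕ) * e) := by
      have := hd (a + m * d) (b + m * e)
      push_cast
      convert this using 2 <;> ring
    refine ⟨w.concat h, ?_⟩
    intro z hz
    rw [SimpleGraph.Walk.support_concat, List.mem_append, List.mem_singleton] at hz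
    rcases hz with hz | hz
    · obtain ⟨i, hi, rfl⟩ := hw z hz
      exact ⟨i, by omega, rfl⟩
    · exact ⟨m + 1, le_rfl, hz⟩

/-! ### The cylinder passage time -/

/-- The endpoint `i√3·n` in lattice coordinates. -/
def top (n : ℕ) : ℤ × ℤ := (-(n : ℤ), 2 * n)

/-- The open strip between rows `0` and `2n`, with the two endpoints `0` and `top n`. -/
def cyl (n : ℕ) : Set (ℤ × ℤ) := {v | v = (0, 0) ∨ v = top n ∨ (0 < v.2 ∧ v.2 < 2 * n)}

theorem triVertex_eq_top (n : ℕ) (u : ℤ × ℤ) :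
    triVertex u = (Real.sqrt 3 * n : ℝ) * Complex.I ↔ u = top n := by
  have h3 : (0 : ℝ) < √3 := by positivity
  rw [Complex.ext_iff, triVertex_re, triVertex_im]
  simp only [Complex.mul_re, Complex.ofReal_re, Complex.I_re, Complex.ofReal_im, Complex.I_im,
    Complex.mul_im, mul_zero, mul_one, sub_zero, add_zero]
  constructor
  · rintro ⟨h1, h2⟩
    have h2' : (u.2 : ℝ) = 2 * n := by
      have : √3 * ((u.2 : ℝ) - 2 * n) = 0 := by linarith
      rcases mul_eq_zero.1 this with h | h <;> linarith
    have h1' : (u.1 : ℝ) = -n := by linarith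
    ext
    · exact_mod_cast h1'
    · exact_mod_cast h2'
  · rintro rfl
    simp only [top]
    push_cast
    constructor <;> ring

theorem im_triVertex_strip (n : ℕ) (v : ℤ × ℤ) :
    (0 < (triVertex v).im ∧ (triVertex v).im < Real.sqrt 3 * n) ↔ (0 < v.2 ∧ v.2 < 2 * n) := by
  have h3 : (0 : ℝ) < √3 := by positivity
  rw [triVertex_im]
  have e1 : 0 < (v.2 : ℝ) * (√3 / 2) ↔ 0 < v.2 := by
    rw [mul_pos_iff_of_pos_right (by positivity)]; norm_cast
  have e2 : (v.2 : ℝ) * (√3 / 2) < √3 * n ↔ v.2 < 2 * n := by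
    rw [show √3 * (n : ℝ) = (2 * n) * (√3 / 2) by ring, mul_lt_mul_iff_left₀ (by positivity)]
    norm_cast
  rw [e1, e2]

theorem exists_walk_of_isChain (l : List (ℤ × ℤ)) (hl : l.IsChain triGraph.Adj)
    (hu : l.head? = some u) (hv : l.getLast? = some v) :
    ∃ w : triGraph.Walk u v, w.support = l := by
  induction l generalizing u with
  | nil => simp at hu
  | cons a l ih =>
    simp at hu
    subst hu
    cases l with
    | nil =>
      simp at hv
      subst hv
      exact ⟨.nil, rfl⟩
    | cons b l =>
      rw [List.isChain_cons_cons] at hl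
      obtain ⟨w, hw⟩ := ih hl.2 rfl (by simpa using hv)
      exact ⟨.cons hl.1 w, by simp [hw]⟩

theorem tCyl_set_eq (ω : Config) {n : ℕ} (hn : 1 ≤ n) :
    {m | ∃ γ : List (ℤ × ℤ), IsPath γ ∧ γ.head? = some (0, 0) ∧
    (∃ u, γ.getLast? = some u ∧ triVertex u = (Real.sqrt 3 * n : ℝ) * Complex.I) ∧
    (∀ v ∈ (γ.drop 1).dropLast,
      0 < (triVertex v).im ∧ (triVertex v).im < Real.sqrt 3 * n) ∧
    pathTime ω γ = m} =
    {m | ∃ w : triGraph.Walk (0, 0) (top n), w.IsPath ∧ (∀ z ∈ w.support, z ∈ cyl n) ∧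
      pathTime ω w.support = m} := by
  have hne : ((0, 0) : ℤ × ℤ) ≠ top n := by
    intro h
    have := congrArg Prod.snd h
    simp [top] at this
    omega
  ext m
  simp only [Set.mem_ofPred_eq]
  constructor
  · rintro ⟨γ, ⟨h0, h1, h2⟩, h3, ⟨u, h4, h5⟩, h6, h7⟩
    rw [triVertex_eq_top] at h5
    subst h5
    have h2' : γ.IsChain triGraph.Adj := List.IsChain.imp (fun a b h => triAdj_iff.1 h) h2
    obtain ⟨w, rfl⟩ := exists_walk_of_isChain γ h2' h3 h4
    refine ⟨w, ⟨⟨w.isPath_def.2 h1 |>.isTrail.edges_nodup⟩, h1⟩, ?_, h7⟩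
    intro z hz
    rw [← SimpleGraph.Walk.cons_tail_support w, List.mem_cons] at hz
    rcases hz with rfl | hz
    · exact Or.inl rfl
    · by_cases hzt : z = top n
      · exact Or.inr (Or.inl hzt)
      · refine Or.inr (Or.inr ((im_triVertex_strip n z).1 (h6 z ?_)))
        have hne' : w.support.tail ≠ [] := List.ne_nil_of_mem hz
        have e := List.dropLast_append_getLast hne'
        rw [← e, List.mem_append] at hz
        rw [List.drop_one]
        rcases hz with hz | hz
        · exact hz
        · exfalso
          apply hzt
          rw [List.mem_singleton] at hz
          rw [hz, List.getLast_tail, SimpleGraph.Walk.getLast_support]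
  · rintro ⟨w, h1, h2, h3⟩
    have hnil : w.support.tail ≠ [] := by
      intro h
      have := w.end_mem_support
      rw [← SimpleGraph.Walk.cons_tail_support, h] at this
      simp at this
      exact hne this.symm
    refine ⟨w.support, ⟨by simp, h1.support_nodup,
      List.IsChain.imp (fun a b h => triAdj_iff.2 h) w.isChain_adj_support⟩, ?_,
      ⟨top n, ?_, (triVertex_eq_top n _).2 rfl⟩, ?_, h3⟩
    · rw [← SimpleGraph.Walk.cons_tail_support]; rfl
    · rw [List.getLast?_eq_some_getLast (by simp), SimpleGraph.Walk.getLast_support]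
    · intro z hz
      rw [im_triVertex_strip]
      rw [List.drop_one] at hz
      have hz' : z ∈ w.support.tail := List.dropLast_subset _ hz
      have hnd := h1.support_nodup
      rcases h2 z (List.mem_of_mem_tail hz') with h | h | h
      · exfalso
        rw [← SimpleGraph.Walk.cons_tail_support, List.nodup_cons] at hnd
        exact hnd.1 (h ▸ hz')
      · exfalso
        have hnd' := hnd.tail
        rw [← List.dropLast_append_getLast hnil, List.nodup_append] at hnd'
        refine hnd'.2.2 z hz _ (List.mem_singleton_self _) ?_
        rw [h, List.getLast_tail, SimpleGraph.Walk.getLast_support]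
      · exact h

theorem tCyl_le_of_reach {n : ℕ} (hn : 1 ≤ n) (h : Reach ω (cyl n) k (0, 0) (top n)) :
    tCyl ω n ≤ k := by
  unfold tCyl
  rw [tCyl_set_eq ω hn]
  obtain ⟨w, h1, h2⟩ := h
  refine le_trans (Nat.sInf_le ⟨w.bypass, w.bypass_isPath, ?_, rfl⟩)
    (le_trans (pathTime_sublist ω w.support_bypass_sublist_support) h2)
  exact fun z hz => h1 z (w.support_bypass_sublist_support.subset hz)

theorem exists_reach_cyl (ω : Config) {n : ℕ} (hn : 1 ≤ n) :
    ∃ k, Reach ω (cyl n) k (0, 0) (top n) := by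
  obtain ⟨w1, hw1⟩ := exists_ray 0 1 (fun a b => by simp [triGraph_adj]) 0 0 (2 * n - 1)
  obtain ⟨w2, hw2⟩ := exists_ray (-1) 0 (fun a b => by simp [triGraph_adj]; omega)
    (0 + (2 * n - 1 : ℕ) * 0) (0 + (2 * n - 1 : ℕ) * 1) n
  have r1 : Reach ω (cyl n) _ _ _ := ⟨w1, fun z hz => by
    obtain ⟨i, hi, rfl⟩ := hw1 z hz
    simp only [cyl, Set.mem_ofPred_eq, Prod.mk.injEq]
    omega, le_rfl⟩
  have r2 : Reach ω (cyl n) _ _ _ := ⟨w2, fun z hz => by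
    obtain ⟨i, hi, rfl⟩ := hw2 z hz
    simp only [cyl, Set.mem_ofPred_eq]
    omega, le_rfl⟩
  refine ⟨_, (r1.trans r2).snoc (z := top n) ?_ (Or.inr (Or.inl rfl))⟩
  simp only [triGraph_adj, top]
  omega

theorem reach_tCyl (ω : Config) {n : ℕ} (hn : 1 ≤ n) :
    Reach ω (cyl n) (tCyl ω n) (0, 0) (top n) := by
  have hne : {m | ∃ w : triGraph.Walk (0, 0) (top n), w.IsPath ∧ (∀ z ∈ w.support, z ∈ cyl n) ∧
      pathTime ω w.support = m}.Nonempty := by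
    obtain ⟨k, w, h1, h2⟩ := exists_reach_cyl ω hn
    exact ⟨_, w.bypass, w.bypass_isPath,
      fun z hz => h1 z (w.support_bypass_sublist_support.subset hz), rfl⟩
  have := Nat.sInf_mem hne
  rw [← tCyl_set_eq ω hn] at this
  change tCyl ω n ∈ _ at this
  rw [tCyl_set_eq ω hn] at this
  obtain ⟨w, _, h2, h3⟩ := this
  exact ⟨w, h2, h3.le⟩

/-! ### Crossing walks share a vertex -/

/-- Parity of the number of steps `(a, b)` of a walk satisfying `f a b`. -/
def walkParity (f : ℤ × ℤ → ℤ × ℤ → Bool) : {u v : ℤ × ℤ} → triGraph.Walk u v → Bool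
  | _, _, .nil => false
  | _, _, .cons (u := u) (v := v) _ w => xor (f u v) (walkParity f w)

theorem walkParity_xor {f g : ℤ × ℤ → ℤ × ℤ → Bool} {S : ℤ × ℤ → Bool} {u v : ℤ × ℤ}
    (w : triGraph.Walk u v)
    (h : ∀ a ∈ w.support, ∀ b ∈ w.support, triGraph.Adj a b →
      xor (f a b) (g a b) = xor (S a) (S b)) :
    xor (walkParity f w) (walkParity g w) = xor (S u) (S v) := by
  induction w with
  | nil => simp [walkParity]
  | @cons u c v hadj w ih =>
    have h1 := ih (fun a ha b hb => h a (by simp [ha]) b (by simp [hb]))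
    have h2 := h u (by simp) c (by simp) hadj
    simp only [walkParity]
    revert h1 h2
    generalize walkParity f w = x1
    generalize walkParity g w = x2
    generalize f u c = x3
    generalize g u c = x4
    generalize S u = x5
    generalize S c = x6
    generalize S v = x7
    revert x1 x2 x3 x4 x5 x6 x7
    decide

/-- The step `(a, b)` crosses the vertical half-line just to the right of `v`, above `v`. -/
def crossesAbove (v a b : ℤ × ℤ) : Bool :=
  decide ((a.1 = v.1 ∧ b.1 = v.1 + 1 ∧ v.2 < a.2) ∨ (b.1 = v.1 ∧ a.1 = v.1 + 1 ∧ v.2 < b.2))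

theorem bool_xor_eq_iff {p q r s : Prop} [Decidable p] [Decidable q] [Decidable r] [Decidable s] :
    xor (decide p) (decide q) = xor (decide r) (decide s) ↔ ((p ↔ q) ↔ (r ↔ s)) := by
  by_cases p <;> by_cases q <;> by_cases r <;> by_cases s <;> simp_all

theorem walkParity_adj {u v p p' : ℤ × ℤ} (w : triGraph.Walk u v) (hp : p ∉ w.support)
    (hp' : p' ∉ w.support) (hadj : triGraph.Adj p p') (hu : u.1 < p.1 ∧ u.1 < p'.1)
    (hv : p.1 < v.1 ∧ p'.1 < v.1) :
    walkParity (crossesAbove p) w = walkParity (crossesAbove p') w := by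
  have key : ∃ c y : ℤ, u.1 < c ∧ c < v.1 ∧ ∃ B : Bool, ∀ a ∈ w.support, ∀ b ∈ w.support,
      triGraph.Adj a b → xor (crossesAbove p a b) (crossesAbove p' a b) =
        xor (decide (B = true ∧ a.1 = c ∧ y < a.2)) (decide (B = true ∧ b.1 = c ∧ y < b.2)) := by
    have hne : ∀ a ∈ w.support, ¬ (a.1 = p.1 ∧ a.2 = p.2) ∧ ¬ (a.1 = p'.1 ∧ a.2 = p'.2) := by
      intro a ha
      refine ⟨fun h => hp ?_, fun h => hp' ?_⟩
      · rwa [← show a = p from Prod.ext h.1 h.2]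
      · rwa [← show a = p' from Prod.ext h.1 h.2]
    rcases lt_trichotomy p.1 p'.1 with h | h | h
    · refine ⟨p'.1, p'.2, hu.2, hv.2, true, fun a ha b hb hab => ?_⟩
      have h1 := hne a ha
      have h2 := hne b hb
      unfold crossesAbove
      rw [bool_xor_eq_iff]
      simp only [triGraph_adj] at hadj hab
      simp only [true_and]
      omega
    · refine ⟨p'.1, p'.2, hu.2, hv.2, false, fun a ha b hb hab => ?_⟩
      have h1 := hne a ha
      have h2 := hne b hb
      unfold crossesAbove
      rw [bool_xor_eq_iff]
      simp only [triGraph_adj] at hadj hab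
      simp only [Bool.false_eq_true, false_and, iff_self, iff_true]
      omega
    · refine ⟨p.1, p.2, hu.1, hv.1, true, fun a ha b hb hab => ?_⟩
      have h1 := hne a ha
      have h2 := hne b hb
      unfold crossesAbove
      rw [bool_xor_eq_iff]
      simp only [triGraph_adj] at hadj hab
      simp only [true_and]
      omega
  obtain ⟨c, y, h1, h2, B, hS⟩ := key
  have := walkParity_xor (S := fun a => decide (B = true ∧ a.1 = c ∧ y < a.2)) w hS
  have e1 : ¬ (u.1 = c) := by omega
  have e2 : ¬ (v.1 = c) := by omega
  simpa [e1, e2] using this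

theorem walkParity_const {u v p p' : ℤ × ℤ} (w : triGraph.Walk u v) (c : triGraph.Walk p p')
    (hdisj : ∀ z ∈ c.support, z ∉ w.support)
    (hcol : ∀ z ∈ c.support, u.1 < z.1 ∧ z.1 < v.1) :
    walkParity (crossesAbove p) w = walkParity (crossesAbove p') w := by
  induction c with
  | nil => rfl
  | @cons p q p' hadj c ih =>
    have hq : q ∈ (SimpleGraph.Walk.cons hadj c).support := by simp
    have hp : p ∈ (SimpleGraph.Walk.cons hadj c).support := by simp
    rw [walkParity_adj w (hdisj p hp) (hdisj q hq) hadj ⟨(hcol p hp).1, (hcol q hq).1⟩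
      ⟨(hcol p hp).2, (hcol q hq).2⟩]
    exact ih (fun z hz => hdisj z (by simp [hz])) (fun z hz => hcol z (by simp [hz]))

/-- A left-right walk in the rows `[y₀, y₁]` meets a walk from row `≤ y₀` to row `≥ y₁`. -/
theorem crossing {u v p p' : ℤ × ℤ} (w : triGraph.Walk u v) (c : triGraph.Walk p p') (y₀ y₁ : ℤ)
    (hrow : ∀ z ∈ w.support, y₀ ≤ z.2 ∧ z.2 ≤ y₁)
    (hcol : ∀ z ∈ c.support, u.1 < z.1 ∧ z.1 < v.1) (hp : p.2 ≤ y₀) (hp' : y₁ ≤ p'.2) :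
    ∃ z, z ∈ w.support ∧ z ∈ c.support := by
  by_contra! hcon
  have hdisj : ∀ z ∈ c.support, z ∉ w.support := fun z h1 h2 => hcon z h2 h1
  have h := walkParity_const w c hdisj hcol
  have hpc := hcol p c.start_mem_support
  have hpd := hdisj p c.start_mem_support
  have h1 := walkParity_xor (f := crossesAbove p) (g := fun _ _ => false)
    (S := fun a => decide (a.1 ≤ p.1)) w (by
      intro a ha b hb hab
      have h1 := hrow a ha
      have h2 := hrow b hb
      have h3 : ¬ (a.1 = p.1 ∧ a.2 = p.2) := fun h => hpd (by rwa [← show a = p from Prod.ext h.1 h.2])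
      have h4 : ¬ (b.1 = p.1 ∧ b.2 = p.2) := fun h => hpd (by rwa [← show b = p from Prod.ext h.1 h.2])
      unfold crossesAbove
      rw [show false = decide False from rfl, bool_xor_eq_iff]
      simp only [triGraph_adj] at hab
      simp only [iff_false, iff_self, iff_true]
      omega)
  have h2 := walkParity_xor (f := crossesAbove p') (g := fun _ _ => false)
    (S := fun _ => false) w (by
      intro a ha b hb hab
      have h1 := hrow a ha
      have h2 := hrow b hb
      unfold crossesAbove
      rw [show false = decide False from rfl, bool_xor_eq_iff]
      simp only [triGraph_adj] at hab
      simp only [iff_false, iff_self, iff_true]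
      omega)
  have e1 : u.1 ≤ p.1 := by omega
  have e2 : ¬ v.1 ≤ p.1 := by omega
  simp only [e1, e2, decide_true, decide_false] at h1
  rw [h] at h1
  generalize walkParity (crossesAbove p') w = x1 at h1 h2
  generalize walkParity (fun _ _ => false) w = x2 at h1 h2
  revert x1 x2
  decide

theorem exists_fst_bounds (l : List (ℤ × ℤ)) (m : ℤ) :
    ∃ B : ℕ, ∀ z ∈ l, -(B : ℤ) < m + z.1 ∧ m + z.1 < B := by
  induction l with
  | nil => exact ⟨0, by simp⟩
  | cons a l ih =>
    obtain ⟨B, hB⟩ := ih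
    refine ⟨B + (m + a.1).natAbs + 1, ?_⟩
    intro z hz
    rw [List.mem_cons] at hz
    rcases hz with rfl | hz
    · omega
    · have := hB z hz
      omega

/-- A version of `crossing` in which the left-right walk is completed by rays: its start and end
are to the left and to the right of the bottom-top walk in their respective rows. -/
theorem crossing_of_rays {u v p p' : ℤ × ℤ} (w : triGraph.Walk u v) (c : triGraph.Walk p p')
    (y₀ y₁ : ℤ) (hrow : ∀ z ∈ w.support, y₀ ≤ z.2 ∧ z.2 ≤ y₁) (hp : p.2 ≤ y₀) (hp' : y₁ ≤ p'.2)
    (hu : ∀ z ∈ c.support, z.2 = u.2 → u.1 ≤ z.1) (hv : ∀ z ∈ c.support, z.2 = v.2 → z.1 ≤ v.1) :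
    ∃ z, z ∈ w.support ∧ z ∈ c.support := by
  obtain ⟨B, hB⟩ := exists_fst_bounds c.support 0
  obtain ⟨l, hl⟩ := exists_ray (-1) 0 (fun a b => by simp [triGraph_adj]; omega) u.1 u.2
    (B + u.1.natAbs)
  obtain ⟨r, hr⟩ := exists_ray 1 0 (fun a b => by simp [triGraph_adj]) v.1 v.2
    (B + v.1.natAbs)
  have hur := hrow u w.start_mem_support
  have hvr := hrow v w.end_mem_support
  obtain ⟨z, hz, hzc⟩ := crossing ((l.reverse.append w).append r) c y₀ y₁ (by
      intro z hz
      simp only [SimpleGraph.Walk.mem_support_append_iff, SimpleGraph.Walk.support_reverse,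
        List.mem_reverse] at hz
      rcases hz with (hz | hz) | hz
      · obtain ⟨i, hi, rfl⟩ := hl z hz
        simpa using hur
      · exact hrow z hz
      · obtain ⟨i, hi, rfl⟩ := hr z hz
        simpa using hvr) (by
      intro z hz
      have := hB z hz
      simp only
      omega) hp hp'
  simp only [SimpleGraph.Walk.mem_support_append_iff, SimpleGraph.Walk.support_reverse,
    List.mem_reverse] at hz
  rcases hz with (hz | hz) | hz
  · obtain ⟨i, hi, rfl⟩ := hl z hz
    have := hu _ hzc (by simp)
    obtain rfl : i = 0 := by simp only at this; omega
    exact ⟨u, w.start_mem_support, by simpa using hzc⟩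
  · exact ⟨z, hz, hzc⟩
  · obtain ⟨i, hi, rfl⟩ := hr z hz
    have := hv _ hzc (by simp)
    obtain rfl : i = 0 := by simp only at this; omega
    exact ⟨v, w.end_mem_support, by simpa using hzc⟩

/-! ### Events, finite dependence and the measure -/

/-- The event `A` is determined by the sites in `S`. -/
def DetBy (S : Finset (ℤ × ℤ)) (A : Set Config) : Prop :=
  ∀ ω ω' : Config, (∀ v ∈ S, ω v = ω' v) → (ω ∈ A ↔ ω' ∈ A)

/-- Events that are open and favoured by blue sites. -/
def BlueInc (A : Set Config) : Prop := IsOpen A ∧ IsLowerSet A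

/-- Configuration equal to `f` on `S` and yellow elsewhere. -/
def extendYellow (S : Finset (ℤ × ℤ)) (f : S → Bool) : Config :=
  fun v => if h : v ∈ S then f ⟨v, h⟩ else true

/-- Make all sites outside `S` yellow. -/
def truncYellow (S : Finset (ℤ × ℤ)) (ω : Config) : Config :=
  extendYellow S (fun v => ω v)

theorem DetBy.mono {S T : Finset (ℤ × ℤ)} {A : Set Config} (h : DetBy S A) (hST : S ⊆ T) :
    DetBy T A := fun ω ω' hω => h ω ω' (fun v hv => hω v (hST hv))

theorem DetBy.inter {S : Finset (ℤ × ℤ)} {A B : Set Config} (h : DetBy S A) (h' : DetBy S B) :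
    DetBy S (A ∩ B) := fun ω ω' hω => and_congr (h ω ω' hω) (h' ω ω' hω)

theorem detBy_univ (S : Finset (ℤ × ℤ)) : DetBy S Set.univ := fun _ _ _ => Iff.rfl

theorem truncYellow_apply {S : Finset (ℤ × ℤ)} {ω : Config} {v : ℤ × ℤ} (h : v ∈ S) :
    truncYellow S ω v = ω v := by simp [truncYellow, extendYellow, h]

theorem DetBy.trunc_mem_iff {S : Finset (ℤ × ℤ)} {A : Set Config} (h : DetBy S A) (ω : Config) :
    truncYellow S ω ∈ A ↔ ω ∈ A :=
  h _ _ (fun _ hv => truncYellow_apply hv)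

theorem DetBy.eq_preimage {S : Finset (ℤ × ℤ)} {A : Set Config} (h : DetBy S A) :
    A = (fun (ω : Config) (v : S) => ω v) ⁻¹' {f | extendYellow S f ∈ A} := by
  ext ω
  exact (h.trunc_mem_iff ω).symm

theorem DetBy.measurableSet {S : Finset (ℤ × ℤ)} {A : Set Config} (h : DetBy S A) :
    MeasurableSet A := by
  rw [h.eq_preimage]
  exact (measurable_pi_lambda _ fun v => measurable_pi_apply _) (Set.toFinite _).measurableSet

theorem BlueInc.measurableSet {A : Set Config} (h : BlueInc A) : MeasurableSet A :=
  h.1.measurableSet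

theorem BlueInc.inter {A B : Set Config} (h : BlueInc A) (h' : BlueInc B) : BlueInc (A ∩ B) :=
  ⟨h.1.inter h'.1, h.2.inter h'.2⟩

theorem blueInc_univ : BlueInc Set.univ := ⟨isOpen_univ, isLowerSet_univ⟩

theorem BlueInc.iUnion {ι : Sort*} {A : ι → Set Config} (h : ∀ i, BlueInc (A i)) :
    BlueInc (⋃ i, A i) :=
  ⟨isOpen_iUnion fun i => (h i).1, isLowerSet_iUnion fun i => (h i).2⟩

theorem BlueInc.preimage {A : Set Config} (h : BlueInc A) (g : ℤ × ℤ → ℤ × ℤ) :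
    BlueInc {ω | (fun v => ω (g v)) ∈ A} := by
  refine ⟨h.1.preimage (continuous_pi fun v => continuous_apply (g v)), ?_⟩
  intro ω ω' hle hω
  exact h.2 (fun v => hle (g v)) hω

theorem siteTime_mono {ω ω' : Config} (h : ω' ≤ ω) (v : ℤ × ℤ) :
    siteTime ω' v ≤ siteTime ω v := by
  have key : ∀ a b : Bool, b ≤ a → (if b then 1 else 0) ≤ (if a then 1 else 0) := by decide
  exact key _ _ (h v)

theorem Reach.of_le {ω ω' : Config} {R : Set (ℤ × ℤ)} {k : ℕ} {u v : ℤ × ℤ} (h : ω' ≤ ω)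
    (hr : Reach ω R k u v) : Reach ω' R k u v := by
  obtain ⟨w, h1, h2⟩ := hr
  exact ⟨w, h1, le_trans (List.sum_le_sum fun v _ => siteTime_mono h v) h2⟩

theorem blueInc_reach (R : Set (ℤ × ℤ)) (k : ℕ) (u v : ℤ × ℤ) :
    BlueInc {ω | Reach ω R k u v} := by
  refine ⟨?_, fun ω ω' h hr => Reach.of_le h hr⟩
  have : {ω | Reach ω R k u v} = ⋃ w : {w : triGraph.Walk u v // ∀ z ∈ w.support, z ∈ R},
      {ω | pathTime ω w.1.support ≤ k} := by
    ext ω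
    simp only [Reach, Set.mem_ofPred_eq, Set.mem_iUnion, Subtype.exists]
    exact exists_congr fun w => by simp
  rw [this]
  refine isOpen_iUnion fun w => ?_
  have hc : ∀ l : List (ℤ × ℤ), Continuous fun ω : Config => pathTime ω l := by
    intro l
    induction l with
    | nil => simpa [pathTime] using continuous_const
    | cons a l ih =>
      simp only [pathTime_cons]
      refine Continuous.add ?_ ih
      have : (fun ω : Config => siteTime ω a) = (fun b : Bool => if b then 1 else 0) ∘
        (fun ω : Config => ω a) := rfl
      rw [this]
      exact continuous_of_discreteTopology.comp (continuous_apply a)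
  exact (isOpen_discrete (Set.Iic k)).preimage (hc _)

theorem detBy_reach (S : Finset (ℤ × ℤ)) {R : Set (ℤ × ℤ)} (hR : R ⊆ S) (k : ℕ) (u v : ℤ × ℤ) :
    DetBy S {ω | Reach ω R k u v} := by
  have : ∀ ω ω' : Config, (∀ v ∈ S, ω v = ω' v) → Reach ω R k u v → Reach ω' R k u v := by
    rintro ω ω' h ⟨w, h1, h2⟩
    refine ⟨w, h1, le_of_eq_of_le ?_ h2⟩
    unfold pathTime
    congr 1
    refine List.map_congr_left fun z hz => ?_
    unfold siteTime
    rw [h z (hR (h1 z hz))]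
  exact fun ω ω' h => ⟨this ω ω' h, this ω' ω fun v hv => (h v hv).symm⟩

section measure

variable {P : Measure Config}

theorem real_cylinder (hP : IsBernoulliHalf P) (S : Finset (ℤ × ℤ)) (f : ℤ × ℤ → Bool) :
    P.real {ω : Config | ∀ v ∈ S, ω v = f v} = (1 / 2 : ℝ) ^ S.card := by
  rw [Measure.real, hP.2 S f]
  simp

open Classical in
/-- The probability of an event determined by finitely many sites. -/
theorem DetBy.real_inter_eq_sum (hP : IsBernoulliHalf P) {S : Finset (ℤ × ℤ)}
    {A E : Set Config} (h : DetBy S A) (hE : MeasurableSet E) :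
    P.real (A ∩ E) = ∑ f : S → Bool, if extendYellow S f ∈ A then
      P.real ({ω : Config | ∀ v ∈ S, ω v = extendYellow S f v} ∩ E) else 0 := by
  have := hP.1
  rw [← Finset.sum_filter, ← measureReal_biUnion_finset]
  · congr 1
    ext ω
    simp only [Set.mem_inter_iff, Finset.mem_filter, Finset.mem_univ, true_and, Set.mem_iUnion,
      Set.mem_ofPred_eq, exists_prop]
    constructor
    · rintro ⟨hA, hE⟩
      exact ⟨fun v => ω v, (h.trunc_mem_iff ω).2 hA, fun v hv => (truncYellow_apply hv).symm, hE⟩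
    · rintro ⟨f, h1, h2, h3⟩
      exact ⟨(h _ _ h2).2 h1, h3⟩
  · intro f _ g _ hfg
    rw [Function.onFun, Set.disjoint_left]
    rintro ω ⟨h1, _⟩ ⟨h2, _⟩
    apply hfg
    ext v
    have e1 := h1 v v.2
    have e2 := h2 v v.2
    rw [e1] at e2
    simpa [extendYellow] using e2
  · intro f _
    refine MeasurableSet.inter ?_ hE
    refine DetBy.measurableSet (S := S) fun ω ω' h => ?_
    simp only [Set.mem_ofPred_eq]
    exact forall₂_congr fun v hv => by rw [h v hv]

open Classical in
theorem DetBy.real_eq_sum (hP : IsBernoulliHalf P) {S : Finset (ℤ × ℤ)}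
    {A : Set Config} (h : DetBy S A) :
    P.real A = (1 / 2 : ℝ) ^ S.card * ∑ f : S → Bool, if extendYellow S f ∈ A then 1 else 0 := by
  have := h.real_inter_eq_sum hP MeasurableSet.univ
  simp only [Set.inter_univ, real_cylinder hP] at this
  rw [this, Finset.mul_sum]
  exact Finset.sum_congr rfl fun f _ => by simp

theorem real_inter_cylinder (hP : IsBernoulliHalf P) {S T : Finset (ℤ × ℤ)} (hST : Disjoint S T)
    {A : Set Config} (h : DetBy S A) (g : ℤ × ℤ → Bool) :
    P.real (A ∩ {ω : Config | ∀ v ∈ T, ω v = g v}) = P.real A * (1 / 2 : ℝ) ^ T.card := by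
  classical
  have hm : MeasurableSet {ω : Config | ∀ v ∈ T, ω v = g v} := by
    refine DetBy.measurableSet (S := T) fun ω ω' h => ?_
    simp only [Set.mem_ofPred_eq]
    exact forall₂_congr fun v hv => by rw [h v hv]
  rw [h.real_inter_eq_sum hP hm, h.real_eq_sum hP, Finset.mul_sum, Finset.sum_mul]
  refine Finset.sum_congr rfl fun f _ => ?_
  split
  · have : {ω : Config | ∀ v ∈ S, ω v = extendYellow S f v} ∩ {ω : Config | ∀ v ∈ T, ω v = g v} =
        {ω : Config | ∀ v ∈ S ∪ T, ω v = if v ∈ S then extendYellow S f v else g v} := by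
      ext ω
      simp only [Set.mem_inter_iff, Set.mem_ofPred_eq, Finset.mem_union]
      constructor
      · rintro ⟨h1, h2⟩ v hv
        by_cases hvS : v ∈ S
        · simp [hvS, h1 v hvS]
        · simp [hvS, h2 v (hv.resolve_left hvS)]
      · intro h
        refine ⟨fun v hv => ?_, fun v hv => ?_⟩
        · have := h v (Or.inl hv)
          simpa [hv] using this
        · have := h v (Or.inr hv)
          simpa [Finset.disjoint_right.1 hST hv] using this
    rw [this, real_cylinder hP, Finset.card_union_of_disjoint hST, pow_add]
    ring
  · simp

/-! ### Truncation to boxes -/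

/-- A box in the lattice. -/
def box (n : ℕ) : Finset (ℤ × ℤ) := Finset.Icc (-(n : ℤ), -(n : ℤ)) ((n : ℤ), (n : ℤ))

theorem mem_box {n : ℕ} {v : ℤ × ℤ} :
    v ∈ box n ↔ -(n : ℤ) ≤ v.1 ∧ v.1 ≤ n ∧ -(n : ℤ) ≤ v.2 ∧ v.2 ≤ n := by
  rw [box, Finset.mem_Icc, Prod.le_def, Prod.le_def]
  simp only
  tauto

theorem box_mono : Monotone box := by
  intro m n h v
  rw [mem_box, mem_box]
  omega

theorem exists_mem_box (v : ℤ × ℤ) : ∃ N, ∀ n ≥ N, v ∈ box n := by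
  refine ⟨v.1.natAbs + v.2.natAbs, fun n hn => ?_⟩
  rw [mem_box]
  omega

/-- The part of `A` visible in the box of size `n`. -/
def boxed (A : Set Config) (n : ℕ) : Set Config := {ω | truncYellow (box n) ω ∈ A}

theorem detBy_boxed (A : Set Config) (n : ℕ) : DetBy (box n) (boxed A n) := by
  intro ω ω' h
  have : truncYellow (box n) ω = truncYellow (box n) ω' := by
    ext v
    simp only [truncYellow, extendYellow]
    split
    · rename_i hv
      rw [h v hv]
    · rfl
  simp [boxed, this]

theorem isLowerSet_boxed {A : Set Config} (h : BlueInc A) (n : ℕ) : IsLowerSet (boxed A n) := by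
  intro ω ω' hle hω
  refine h.2 (fun v => ?_) hω
  simp only [truncYellow, extendYellow]
  split
  · exact hle v
  · exact le_rfl

theorem boxed_mono {A : Set Config} (h : BlueInc A) : Monotone (boxed A) := by
  intro m n hmn ω hω
  refine h.2 (fun v => ?_) hω
  simp only [truncYellow, extendYellow]
  by_cases hv : v ∈ box m
  · simp [hv, box_mono hmn hv]
  · simp [hv]

theorem iUnion_boxed {A : Set Config} (h : BlueInc A) : ⋃ n, boxed A n = A := by
  ext ω
  rw [Set.mem_iUnion]
  constructor
  · rintro ⟨n, hω⟩
    refine h.2 (fun v => ?_) hω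
    simp only [truncYellow, extendYellow]
    split <;> simp
  · intro hω
    have ht : Tendsto (fun n => truncYellow (box n) ω) atTop (𝓝 ω) := by
      rw [tendsto_pi_nhds]
      intro v
      obtain ⟨N, hN⟩ := exists_mem_box v
      refine tendsto_const_nhds.congr' ?_
      filter_upwards [eventually_ge_atTop N] with n hn
      rw [truncYellow_apply (hN n hn)]
    exact (ht.eventually (h.1.mem_nhds hω)).exists

theorem tendsto_boxed_inter (hP : IsBernoulliHalf P) {A : Set Config} (h : BlueInc A)
    (E : Set Config) :
    Tendsto (fun n => P.real (boxed A n ∩ E)) atTop (𝓝 (P.real (A ∩ E))) := by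
  have := hP.1
  have : Tendsto (fun n => P (boxed A n ∩ E)) atTop (𝓝 (P (⋃ n, boxed A n ∩ E))) :=
    tendsto_measure_iUnion_atTop fun m n hmn => Set.inter_subset_inter_left _ (boxed_mono h hmn)
  rw [← Set.iUnion_inter, iUnion_boxed h] at this
  exact (ENNReal.tendsto_toReal (measure_ne_top P _)).comp this

/-! ### Invariance under relabelling -/

theorem BlueInc.real_unique {P' : Measure Config} (hP : IsBernoulliHalf P)
    (hP' : IsBernoulliHalf P') {A : Set Config} (h : BlueInc A) : P.real A = P'.real A := by
  have h1 := tendsto_boxed_inter hP h Set.univ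
  have h2 := tendsto_boxed_inter hP' h Set.univ
  simp only [Set.inter_univ] at h1 h2
  refine tendsto_nhds_unique h1 (h2.congr fun n => ?_)
  rw [(detBy_boxed A n).real_eq_sum hP, (detBy_boxed A n).real_eq_sum hP']

theorem BlueInc.real_preimage (hP : IsBernoulliHalf P) {A : Set Config} (h : BlueInc A)
    (g : ℤ × ℤ ≃ ℤ × ℤ) : P.real {ω | (fun v => ω (g v)) ∈ A} = P.real A := by
  have := hP.1
  have hmeas : Measurable fun (ω : Config) v => ω (g v) :=
    measurable_pi_lambda _ fun v => measurable_pi_apply _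
  have hP' : IsBernoulliHalf (P.map fun ω v => ω (g v)) := by
    refine ⟨Measure.isProbabilityMeasure_map hmeas.aemeasurable, fun s f => ?_⟩
    rw [Measure.map_apply hmeas]
    · have := hP.2 (s.map g.toEmbedding) (fun v => f (g.symm v))
      rw [Finset.card_map] at this
      rw [← this]
      congr 1
      ext ω
      simp only [Set.mem_preimage, Set.mem_ofPred_eq, Finset.mem_map_equiv]
      constructor
      · intro h v hv
        simpa using h (g.symm v) hv
      · intro h v hv
        simpa using h (g v) (by simpa using hv)
    · refine DetBy.measurableSet (S := s) fun ω ω' h => ?_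
      simp only [Set.mem_ofPred_eq]
      exact forall₂_congr fun v hv => by rw [h v hv]
  rw [h.real_unique hP hP', map_measureReal_apply hmeas h.measurableSet]
  rfl

/-! ### Positive association -/

theorem extendYellow_mono {S : Finset (ℤ × ℤ)} {f g : S → Bool} (h : f ≤ g) :
    extendYellow S f ≤ extendYellow S g := by
  intro v
  simp only [extendYellow]
  split
  · exact h _
  · exact le_rfl

theorem harris_cylinder (hP : IsBernoulliHalf P) {S T : Finset (ℤ × ℤ)} (hT : T ⊆ S)
    {A B : Set Config} (hA : IsLowerSet A) (hA' : DetBy S A) (hB : IsLowerSet B)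
    (hB' : DetBy S B) (g : ℤ × ℤ → Bool) :
    P.real (A ∩ {ω : Config | ∀ v ∈ T, ω v = g v}) * P.real (B ∩ {ω | ∀ v ∈ T, ω v = g v}) ≤
      P.real {ω : Config | ∀ v ∈ T, ω v = g v} *
        P.real (A ∩ B ∩ {ω : Config | ∀ v ∈ T, ω v = g v}) := by
  classical
  obtain ⟨C, hC⟩ : ∃ C : Set Config, C = {ω | ∀ v ∈ T, ω v = g v} := ⟨_, rfl⟩
  have hmem : ∀ ω, ω ∈ C ↔ ∀ v ∈ T, ω v = g v := fun ω => by rw [hC]; rfl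
  rw [← hC]
  have hC' : DetBy S C := by
    intro ω ω' h
    rw [hmem, hmem]
    exact forall₂_congr fun v hv => by rw [h v (hT hv)]
  have key := fkg (α := S → Bool) (μ := fun f => if extendYellow S f ∈ C then (1 : ℝ) else 0)
    (f := fun f => if extendYellow S f ∈ A then 0 else 1)
    (g := fun f => if extendYellow S f ∈ B then 0 else 1)
    (by intro f; simp only [Pi.zero_apply]; split <;> norm_num)
    (by intro f; simp only [Pi.zero_apply]; split <;> norm_num)
    (by intro f; simp only [Pi.zero_apply]; split <;> norm_num)
    (by
      intro f f' hf
      have := hA (extendYellow_mono hf)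
      simp only
      by_cases h1 : extendYellow S f' ∈ A
      · simp [h1, this h1]
      · simp only [h1, if_false]; split <;> norm_num)
    (by
      intro f f' hf
      have := hB (extendYellow_mono hf)
      simp only
      by_cases h1 : extendYellow S f' ∈ B
      · simp [h1, this h1]
      · simp only [h1, if_false]; split <;> norm_num)
    (by
      intro f f'
      by_cases h1 : extendYellow S f ∈ C
      · by_cases h2 : extendYellow S f' ∈ C
        · have h3 : extendYellow S (f ⊓ f') ∈ C := by
            rw [hmem]
            intro v hv
            have e1 := (hmem _).1 h1 v hv
            have e2 := (hmem _).1 h2 v hv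
            simp only [extendYellow, hT hv, dif_pos] at e1 e2 ⊢
            simp [e1, e2]
          have h4 : extendYellow S (f ⊔ f') ∈ C := by
            rw [hmem]
            intro v hv
            have e1 := (hmem _).1 h1 v hv
            have e2 := (hmem _).1 h2 v hv
            simp only [extendYellow, hT hv, dif_pos] at e1 e2 ⊢
            simp [e1, e2]
          simp [h1, h2, h3, h4]
        · simp only [h2, if_false, mul_zero]; positivity
      · simp only [h1, if_false, zero_mul]; positivity)
  rw [(hA'.inter hC').real_eq_sum hP, (hB'.inter hC').real_eq_sum hP, hC'.real_eq_sum hP,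
    ((hA'.inter hB').inter hC').real_eq_sum hP]
  set μ : (S → Bool) → ℝ := fun f => if extendYellow S f ∈ C then (1 : ℝ) else 0 with hμ
  set a : (S → Bool) → ℝ := fun f => if extendYellow S f ∈ A ∩ C then (1 : ℝ) else 0 with ha
  set b : (S → Bool) → ℝ := fun f => if extendYellow S f ∈ B ∩ C then (1 : ℝ) else 0 with hb
  set d : (S → Bool) → ℝ := fun f => if extendYellow S f ∈ A ∩ B ∩ C then (1 : ℝ) else 0 with hd
  have e1 : ∀ f, (if extendYellow S f ∈ C then (1 : ℝ) else 0) * (if extendYellow S f ∈ A then 0 else 1) = μ f - a f := by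
    intro f
    by_cases h1 : extendYellow S f ∈ C <;> by_cases h2 : extendYellow S f ∈ A <;>
      simp [hμ, ha, h1, h2]
  have e2 : ∀ f, (if extendYellow S f ∈ C then (1 : ℝ) else 0) * (if extendYellow S f ∈ B then 0 else 1) = μ f - b f := by
    intro f
    by_cases h1 : extendYellow S f ∈ C <;> by_cases h3 : extendYellow S f ∈ B <;>
      simp [hμ, hb, h1, h3]
  have e3 : ∀ f, (if extendYellow S f ∈ C then (1 : ℝ) else 0) * ((if extendYellow S f ∈ A then 0 else 1) *
      (if extendYellow S f ∈ B then 0 else 1)) = μ f - a f - b f + d f := by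
    intro f
    by_cases h1 : extendYellow S f ∈ C <;> by_cases h2 : extendYellow S f ∈ A <;>
      by_cases h3 : extendYellow S f ∈ B <;> simp [hμ, ha, hb, hd, h1, h2, h3]
  simp only [e1, e2, e3] at key
  change _ ≤ (∑ f, μ f) * _ at key
  simp only [Finset.sum_add_distrib, Finset.sum_sub_distrib] at key
  have h2 : (∑ f, a f) * (∑ f, b f) ≤ (∑ f, μ f) * (∑ f, d f) := by nlinarith
  have h3 : (0 : ℝ) ≤ ((1 / 2 : ℝ) ^ S.card) ^ 2 := by positivity
  have h4 := mul_le_mul_of_nonneg_left h2 h3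
  have h5 : (1 / 2 : ℝ) ^ S.card * (∑ f, a f) * ((1 / 2 : ℝ) ^ S.card * ∑ f, b f) ≤
      (1 / 2 : ℝ) ^ S.card * (∑ f, μ f) * ((1 / 2 : ℝ) ^ S.card * ∑ f, d f) := by linarith
  simp only [hμ, ha, hb, hd] at h5
  convert h5

theorem harris_conditional_finite (hP : IsBernoulliHalf P) {S U T : Finset (ℤ × ℤ)}
    (hUT : Disjoint U T) {A B G : Set Config} (hA : IsLowerSet A) (hA' : DetBy S A)
    (hB : IsLowerSet B) (hB' : DetBy U B) (hG : DetBy T G) :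
    P.real B * P.real (A ∩ G) ≤ P.real (A ∩ B ∩ G) := by
  classical
  rw [Set.inter_comm A G, Set.inter_comm (A ∩ B) G,
    hG.real_inter_eq_sum hP hA'.measurableSet,
    hG.real_inter_eq_sum hP (hA'.measurableSet.inter hB'.measurableSet), Finset.mul_sum]
  refine Finset.sum_le_sum fun f _ => ?_
  split
  · have h := harris_cylinder hP (S := S ∪ U ∪ T) (T := T) (by intro v; simp; tauto) hA
      (hA'.mono (by intro v; simp; tauto)) hB (hB'.mono (by intro v; simp; tauto))
      (extendYellow T f)
    rw [real_inter_cylinder hP hUT hB', real_cylinder hP] at h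
    rw [Set.inter_comm _ A, Set.inter_comm _ (A ∩ B)]
    have h3 : (0 : ℝ) < (1 / 2 : ℝ) ^ T.card := by positivity
    nlinarith
  · simp

theorem harris_conditional (hP : IsBernoulliHalf P) {U T : Finset (ℤ × ℤ)}
    (hUT : Disjoint U T) {A B G : Set Config} (hA : BlueInc A)
    (hB : IsLowerSet B) (hB' : DetBy U B) (hG : DetBy T G) :
    P.real B * P.real (A ∩ G) ≤ P.real (A ∩ B ∩ G) := by
  rw [Set.inter_assoc]
  refine le_of_tendsto_of_tendsto' ((tendsto_boxed_inter hP hA G).const_mul _)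
    (tendsto_boxed_inter hP hA (B ∩ G)) fun n => ?_
  rw [← Set.inter_assoc]
  exact harris_conditional_finite hP hUT (isLowerSet_boxed hA n) (detBy_boxed A n) hB hB' hG

theorem harris (hP : IsBernoulliHalf P) {A B : Set Config} (hA : BlueInc A) (hB : BlueInc B) :
    P.real A * P.real B ≤ P.real (A ∩ B) := by
  have h1 := tendsto_boxed_inter hP hB Set.univ
  have h2 := tendsto_boxed_inter hP hB A
  simp only [Set.inter_univ] at h1
  rw [mul_comm, Set.inter_comm]
  refine le_of_tendsto_of_tendsto' (h1.mul_const _) h2 fun n => ?_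
  have := harris_conditional hP (Finset.disjoint_empty_right (box n)) hA (isLowerSet_boxed hB n)
    (detBy_boxed B n) (detBy_univ ∅)
  simpa [Set.inter_comm] using this

theorem detBy_iInter_compl {B : ℕ → Set Config} {U : ℕ → Finset (ℤ × ℤ)}
    (hB' : ∀ i, DetBy (U i) (B i)) (i : ℕ) :
    DetBy ((Finset.range i).biUnion U) (⋂ m ∈ Finset.range i, (B m)ᶜ) := by
  intro ω ω' h
  simp only [Set.mem_iInter]
  refine forall₂_congr fun m hm => not_congr (hB' m ω ω' fun v hv => h v ?_)
  exact Finset.mem_biUnion.2 ⟨m, hm, hv⟩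

/-- Among many likely events, each paired with an independent source of rare help, one pair
occurs with probability bounded below. -/
theorem real_iUnion_inter_ge (hP : IsBernoulliHalf P) {A B : ℕ → Set Config}
    {U : ℕ → Finset (ℤ × ℤ)} {M : ℕ} {Q : ℝ}
    (hA : ∀ i, BlueInc (A i)) (hA' : ∀ i < M, 3 / 4 ≤ P.real (A i)) (hB : ∀ i, IsLowerSet (B i))
    (hB' : ∀ i, DetBy (U i) (B i)) (hU : ∀ i j, i < j → Disjoint (U i) (U j))
    (hQ : ∀ i, Q ≤ P.real (B i)) (hMQ : 1 ≤ M * Q) :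
    1 / 8 ≤ P.real (⋃ i ∈ Finset.range M, A i ∩ B i) := by
  have := hP.1
  have inv : ∀ i ≤ M, 1 / 8 ≤ P.real (⋃ m ∈ Finset.range i, A m ∩ B m) ∨
      1 / 4 * ∑ m ∈ Finset.range i, P.real (B m) ≤ P.real (⋃ m ∈ Finset.range i, A m ∩ B m) := by
    intro i
    induction i with
    | zero => intro _; right; simp
    | succ i ih =>
      intro hi
      have hmono : P.real (⋃ m ∈ Finset.range i, A m ∩ B m) ≤
          P.real (⋃ m ∈ Finset.range (i + 1), A m ∩ B m) :=
        measureReal_mono (Set.biUnion_subset_biUnion_left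
          (fun m hm => Finset.range_subset_range.2 (Nat.le_succ i) hm)) (measure_ne_top P _)
      rcases ih (by omega) with h | h
      · left; linarith
      by_cases hs : 1 / 2 < ∑ m ∈ Finset.range i, P.real (B m)
      · left; linarith
      right
      set G : Set Config := ⋂ m ∈ Finset.range i, (B m)ᶜ with hGdef
      have hG := detBy_iInter_compl hB' i
      have hGc : Gᶜ = ⋃ m ∈ Finset.range i, B m := by
        simp [hGdef, Set.compl_iInter]
      have hGm : P.real Gᶜ ≤ ∑ m ∈ Finset.range i, P.real (B m) := by
        rw [hGc]; exact measureReal_biUnion_finset_le _ _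
      have hdisj : Disjoint ((Finset.range i).biUnion U) (U i) := by
        rw [Finset.disjoint_biUnion_left]
        exact fun m hm => hU m i (Finset.mem_range.1 hm)
      have hcond := harris_conditional hP hdisj.symm (hA i) (hB i) (hB' i) hG
      have hAG : P.real (A i) ≤ P.real (A i ∩ G) + P.real Gᶜ - P.real ((A i)ᶜ ∩ Gᶜ) := by
        have e1 := measureReal_inter_add_sdiff (μ := P) (s := A i) hG.measurableSet
        have e2 := measureReal_inter_add_sdiff (μ := P) (s := Gᶜ) (hA i).measurableSet
        have e3 : A i \ G = Gᶜ ∩ A i := by rw [Set.sdiff_eq, Set.inter_comm]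
        have e4 : Gᶜ \ A i = (A i)ᶜ ∩ Gᶜ := by rw [Set.sdiff_eq, Set.inter_comm]
        rw [e3] at e1
        rw [e4] at e2
        linarith
      have hAi := hA' i (by omega)
      have hnn : 0 ≤ P.real ((A i)ᶜ ∩ Gᶜ) := measureReal_nonneg
      have hquarter : 1 / 4 ≤ P.real (A i ∩ G) := by linarith
      have hsub : (⋃ m ∈ Finset.range i, A m ∩ B m) ∪ (A i ∩ B i ∩ G) ⊆
          ⋃ m ∈ Finset.range (i + 1), A m ∩ B m := by
        intro ω hω
        simp only [Set.mem_union, Set.mem_iUnion, Finset.mem_range, exists_prop] at hω ⊢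
        rcases hω with ⟨m, hm, h⟩ | h
        · exact ⟨m, by omega, h⟩
        · exact ⟨i, by omega, h.1⟩
      have hdis : Disjoint (⋃ m ∈ Finset.range i, A m ∩ B m) (A i ∩ B i ∩ G) := by
        rw [Set.disjoint_left]
        intro ω h1 h2
        simp only [Set.mem_iUnion, exists_prop] at h1
        obtain ⟨m, hm, h1⟩ := h1
        have := h2.2
        simp only [hGdef, Set.mem_iInter] at this
        exact this m hm h1.2
      have hle := measureReal_mono (μ := P) hsub (measure_ne_top P _)
      rw [measureReal_union hdis (((hA i).measurableSet.inter (hB' i).measurableSet).inter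
        hG.measurableSet) (measure_ne_top P _) (measure_ne_top P _)] at hle
      rw [Finset.sum_range_succ]
      have hp : 0 ≤ P.real (B i) := measureReal_nonneg
      nlinarith
  rcases inv M le_rfl with h | h
  · exact h
  · have : (M : ℝ) * Q ≤ ∑ m ∈ Finset.range M, P.real (B m) := by
      have := Finset.card_nsmul_le_sum (Finset.range M) (fun m => P.real (B m)) Q
        (fun m _ => hQ m)
      simpa using this
    linarith

end measure

/-! ### Consequences of almost sure convergence -/

/-- With probability close to one, `t_{0,n}` is close to `c log n` for all large `n`. -/
def LogLaw (P : Measure Config) (c : ℝ) : Prop :=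
  ∀ δ > 0, ∀ b > 0, ∃ (N : ℕ) (E : Set Config), 1 - b ≤ P.real E ∧ ∀ ω ∈ E, ∀ n ≥ N,
    Reach ω (cyl n) ⌊(c + δ) * Real.log n⌋₊ (0, 0) (top n) ∧
    ∀ k : ℕ, Reach ω (cyl n) k (0, 0) (top n) → (c - δ) * Real.log n < k

theorem logLaw_of_tendsto {P : Measure Config} (hP : IsBernoulliHalf P) {c : ℝ}
    (h : P {ω : Config | Tendsto (fun n : ℕ => (tCyl ω n : ℝ) / Real.log n) atTop (𝓝 c)} = 1) :
    LogLaw P c := by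
  have := hP.1
  intro δ hδ b hb
  set E : ℕ → Set Config := fun N => {ω | ∀ n ≥ N,
    (tCyl ω n : ℝ) / Real.log n ∈ Set.Ioo (c - δ) (c + δ)} with hE
  have hmono : Monotone E := fun m n hmn ω hω k hk => hω k (hmn.trans hk)
  have hunion : P (⋃ N, E N) = 1 := by
    refine le_antisymm prob_le_one (h.symm.le.trans (measure_mono fun ω hω => ?_))
    rw [Set.mem_iUnion]
    exact eventually_atTop.1 (hω.eventually (Ioo_mem_nhds (by linarith) (by linarith)))
  have ht := tendsto_measure_iUnion_atTop (μ := P) hmono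
  rw [hunion] at ht
  have ht' := (ENNReal.tendsto_toReal ENNReal.one_ne_top).comp ht
  have hev := ht'.eventually (Ioi_mem_nhds (show 1 - b < (1 : ENNReal).toReal by simp [hb]))
  obtain ⟨N, hN, hN2⟩ := (hev.and (eventually_ge_atTop 2)).exists
  refine ⟨N, E N, le_of_lt hN, fun ω hω n hn => ?_⟩
  have hlog : 0 < Real.log n := Real.log_pos (by
    have : 2 ≤ n := hN2.trans hn
    exact_mod_cast this)
  have h1 := hω n hn
  rw [Set.mem_Ioo, lt_div_iff₀ hlog, div_lt_iff₀ hlog] at h1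
  have hn1 : 1 ≤ n := by omega
  refine ⟨(reach_tCyl ω hn1).mono subset_rfl (Nat.le_floor h1.2.le), fun k hk => ?_⟩
  have : (tCyl ω n : ℝ) ≤ k := by exact_mod_cast tCyl_le_of_reach hn1 hk
  linarith

theorem real_le_of_disjoint {P : Measure Config} [IsProbabilityMeasure P] {A E : Set Config}
    {b : ℝ} (hA : MeasurableSet A) (hE : 1 - b ≤ P.real E) (h : ∀ ω ∈ E, ω ∉ A) :
    P.real A ≤ b := by
  have h1 : P.real (E ∪ A) = P.real E + P.real A :=
    measureReal_union (Set.disjoint_left.2 h) hA (measure_ne_top P _) (measure_ne_top P _)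
  have h2 : P.real (E ∪ A) ≤ 1 := measureReal_le_one
  linarith

/-- Comparison of events through a symmetry of the lattice. -/
theorem real_le_of_symmetry {P : Measure Config} (hP : IsBernoulliHalf P) {A B : Set Config}
    (hA : BlueInc A) (g : ℤ × ℤ ≃ ℤ × ℤ) (h : ∀ ω : Config, (fun v => ω (g v)) ∈ A → ω ∈ B) :
    P.real A ≤ P.real B := by
  have := hP.1
  rw [← hA.real_preimage hP g]
  exact measureReal_mono h (measure_ne_top P _)

/-! ### Lattice symmetries -/

/-- Translation by `a`. -/
def shift (a : ℤ × ℤ) : ℤ × ℤ ≃ ℤ × ℤ where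
  toFun v := (v.1 + a.1, v.2 + a.2)
  invFun v := (v.1 - a.1, v.2 - a.2)
  left_inv v := by ext <;> simp
  right_inv v := by ext <;> simp

theorem shift_apply (a v : ℤ × ℤ) : shift a v = (v.1 + a.1, v.2 + a.2) := rfl

theorem shift_adj (a : ℤ × ℤ) (u v : ℤ × ℤ) (h : triGraph.Adj u v) :
    triGraph.Adj (shift a u) (shift a v) := by
  simp only [triGraph_adj, shift_apply] at h ⊢
  omega

/-- Rotation by `π/3`. -/
def rot : ℤ × ℤ ≃ ℤ × ℤ where
  toFun v := (-v.2, v.1 + v.2)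
  invFun v := (v.1 + v.2, -v.1)
  left_inv v := by ext <;> simp
  right_inv v := by ext <;> simp

theorem rot_apply (v : ℤ × ℤ) : rot v = (-v.2, v.1 + v.2) := rfl

theorem rot_adj (u v : ℤ × ℤ) (h : triGraph.Adj u v) : triGraph.Adj (rot u) (rot v) := by
  simp only [triGraph_adj, rot_apply] at h ⊢
  omega

/-- Reflection across the row `r`. -/
def flipRow (r : ℤ) : ℤ × ℤ ≃ ℤ × ℤ where
  toFun v := (v.1 + v.2 - r, 2 * r - v.2)
  invFun v := (v.1 + v.2 - r, 2 * r - v.2)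
  left_inv v := by ext <;> simp; ring
  right_inv v := by ext <;> simp; ring

theorem flipRow_apply (r : ℤ) (v : ℤ × ℤ) : flipRow r v = (v.1 + v.2 - r, 2 * r - v.2) := rfl

theorem flipRow_adj (r : ℤ) (u v : ℤ × ℤ) (h : triGraph.Adj u v) :
    triGraph.Adj (flipRow r u) (flipRow r v) := by
  simp only [triGraph_adj, flipRow_apply] at h ⊢
  omega

/-- Reflection across the vertical line through the origin. -/
def flipCol : ℤ × ℤ ≃ ℤ × ℤ where
  toFun v := (-v.1 - v.2, v.2)
  invFun v := (-v.1 - v.2, v.2)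
  left_inv v := by ext <;> simp
  right_inv v := by ext <;> simp

theorem flipCol_apply (v : ℤ × ℤ) : flipCol v = (-v.1 - v.2, v.2) := rfl

theorem flipCol_adj (u v : ℤ × ℤ) (h : triGraph.Adj u v) :
    triGraph.Adj (flipCol u) (flipCol v) := by
  simp only [triGraph_adj, flipCol_apply] at h ⊢
  omega

/-- The ball of radius `r` around `a` in the graph metric: a hexagon. -/
def hexBall (a : ℤ × ℤ) (r : ℤ) : Set (ℤ × ℤ) :=
  {v | -r ≤ v.1 - a.1 ∧ v.1 - a.1 ≤ r ∧ -r ≤ v.2 - a.2 ∧ v.2 - a.2 ≤ r ∧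
    -r ≤ v.1 + v.2 - a.1 - a.2 ∧ v.1 + v.2 - a.1 - a.2 ≤ r}

theorem mem_hexBall {a v : ℤ × ℤ} {r : ℤ} : v ∈ hexBall a r ↔
    -r ≤ v.1 - a.1 ∧ v.1 - a.1 ≤ r ∧ -r ≤ v.2 - a.2 ∧ v.2 - a.2 ≤ r ∧
    -r ≤ v.1 + v.2 - a.1 - a.2 ∧ v.1 + v.2 - a.1 - a.2 ≤ r := Iff.rfl

theorem mem_hexBall_trans {a b c : ℤ × ℤ} {r s t : ℤ} (h : b ∈ hexBall a r) (h' : c ∈ hexBall b s)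
    (ht : r + s ≤ t) : c ∈ hexBall a t := by
  rw [mem_hexBall] at *
  omega

theorem mem_hexBall_of_adj {a b : ℤ × ℤ} (h : triGraph.Adj a b) : b ∈ hexBall a 1 := by
  rw [triGraph_adj] at h
  rw [mem_hexBall]
  omega

theorem mem_hexBall_self {a : ℤ × ℤ} {r : ℤ} (h : 0 ≤ r) : a ∈ hexBall a r := by
  rw [mem_hexBall]
  omega

/-! ### Long blue connections -/

theorem siteTime_eq_zero_or_one (ω : Config) (v : ℤ × ℤ) : siteTime ω v = 0 ∨ siteTime ω v = 1 := by
  unfold siteTime; split <;> simp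

/-- If blue clusters met by a walk are small, its length is controlled by its passage time. -/
theorem mem_hexBall_of_no_arm {ω : Config} {r : ℤ} (hr : 0 ≤ r) {u v : ℤ × ℤ}
    (w : triGraph.Walk u v)
    (h : ∀ a ∈ w.support, ∀ z, Reach ω Set.univ 0 a z → z ∈ hexBall a (r - 1)) :
    v ∈ hexBall u ((pathTime ω w.support + 1) * (r + 1)) := by
  have key : (siteTime ω u = 1 → v ∈ hexBall u (pathTime ω w.support * (r + 1))) ∧
      (siteTime ω u = 0 → ∃ z, Reach ω Set.univ 0 u z ∧
        v ∈ hexBall z (pathTime ω w.support * (r + 1) + 1)) := by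
    induction w with
    | @nil u =>
      refine ⟨fun hu => mem_hexBall_self (by positivity), fun hu => ⟨u, Reach.refl trivial hu.le,
        mem_hexBall_self (by positivity)⟩⟩
    | @cons u c v hadj w ih =>
      have ih := ih fun a ha => h a (by simp [ha])
      have hc := h c (by simp)
      have h1 := mem_hexBall_of_adj hadj
      rw [SimpleGraph.Walk.support_cons, pathTime_cons]
      generalize pathTime ω w.support = k at *
      constructor
      · intro hu
        rw [hu]
        rcases siteTime_eq_zero_or_one ω c with h0 | h0
        · obtain ⟨z, hz, hz'⟩ := ih.2 h0
          refine mem_hexBall_trans h1 (mem_hexBall_trans (hc z hz) hz' le_rfl) ?_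
          push_cast
          linarith
        · refine mem_hexBall_trans h1 (ih.1 h0) ?_
          push_cast
          linarith
      · intro hu
        rw [hu, zero_add]
        rcases siteTime_eq_zero_or_one ω c with h0 | h0
        · obtain ⟨z, hz, hz'⟩ := ih.2 h0
          refine ⟨z, ?_, hz'⟩
          have := Reach.cons hadj (Set.mem_univ _) hz
          rwa [hu] at this
        · refine ⟨u, Reach.refl trivial hu.le, mem_hexBall_trans h1 (ih.1 h0) (by linarith)⟩
  rcases siteTime_eq_zero_or_one ω u with h0 | h0
  · obtain ⟨z, hz, hz'⟩ := key.2 h0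
    refine mem_hexBall_trans (h u (by simp) z hz) hz' ?_
    linarith
  · exact mem_hexBall_trans (mem_hexBall_self (r := r + 1) (by positivity)) (key.1 h0) (by linarith)

/-- `a` is joined by blue sites to distance `r`. -/
def arm (r : ℕ) (a : ℤ × ℤ) : Set Config :=
  ⋃ b : {b : ℤ × ℤ // b ∉ hexBall a (r - 1)}, {ω | Reach ω Set.univ 0 a b}

theorem mem_arm {r : ℕ} {a : ℤ × ℤ} {ω : Config} :
    ω ∈ arm r a ↔ ∃ b, b ∉ hexBall a (r - 1) ∧ Reach ω Set.univ 0 a b := by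
  simp [arm]

theorem blueInc_arm (r : ℕ) (a : ℤ × ℤ) : BlueInc (arm r a) :=
  BlueInc.iUnion fun _ => blueInc_reach _ _ _ _

theorem exists_arm {ω : Config} {r n k m : ℕ} (hm : (k + 1) * (r + 1) ≤ m) (hn : m < 2 * n)
    (h : Reach ω (cyl n) k (0, 0) (top n)) : ∃ a ∈ box (m + 1), ω ∈ arm r a := by
  by_contra! hcon
  obtain ⟨a, b, i, j, hab, hb, -, hij, h1, h2⟩ := h.first_hit (fun v => v ∉ hexBall (0, 0) m)
    (by simp [mem_hexBall]) (by simp only [mem_hexBall, top]; omega)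
  have h1' : Reach ω (hexBall (0, 0) (m + 1)) (i + j) (0, 0) b := by
    have hbm : b ∈ hexBall (0, 0) ((m : ℤ) + 1) :=
      mem_hexBall_trans (by simpa using h1.right_mem.2) (mem_hexBall_of_adj hab) le_rfl
    refine ((h1.mono (R' := hexBall (0, 0) ((m : ℤ) + 1)) ?_ le_rfl).snoc hab hbm).mono subset_rfl ?_
    · intro y hy
      have := not_not.1 hy.2
      exact mem_hexBall_trans this (mem_hexBall_self le_rfl) (by omega)
    · have := h2.left_time
      omega
  obtain ⟨w, hw, hw'⟩ := h1'
  apply hb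
  have := mem_hexBall_of_no_arm (r := r) (by positivity) w (fun a ha z hz => by
    by_contra hz'
    refine hcon a ?_ (mem_arm.2 ⟨z, hz', hz⟩)
    have := hw a ha
    rw [mem_hexBall] at this
    rw [mem_box]
    simp only at this
    push_cast
    omega)
  refine mem_hexBall_trans this (mem_hexBall_self le_rfl) ?_
  have h3 : (pathTime ω w.support + 1) * (r + 1) ≤ (k + 1) * (r + 1) :=
    Nat.mul_le_mul_right _ (by omega)
  rw [add_zero]
  exact_mod_cast h3.trans hm

theorem real_arm_le (hP : IsBernoulliHalf P) (r : ℕ) (a : ℤ × ℤ) :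
    P.real (arm r a) ≤ P.real (arm r (0, 0)) := by
  refine real_le_of_symmetry hP (blueInc_arm r a) (shift (-a.1, -a.2)) fun ω hω => ?_
  obtain ⟨b, hb, h⟩ := mem_arm.1 hω
  refine mem_arm.2 ⟨shift (-a.1, -a.2) b, ?_, ?_⟩
  · simp only [mem_hexBall, shift_apply] at hb ⊢
    omega
  · have := h.map (R' := Set.univ) (shift_adj (-a.1, -a.2)) (fun _ _ => trivial)
    simpa [shift_apply] using this

theorem card_box (n : ℕ) : (box n).card = (2 * n + 1) ^ 2 := by
  rw [box, ← Finset.Icc_product_Icc]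
  simp only [Finset.card_product, Int.card_Icc]
  rw [show ((n : ℤ) + 1 - -(n : ℤ)).toNat = 2 * n + 1 by omega, sq]

theorem real_arm_ge {c : ℝ} (hP : IsBernoulliHalf P) (hc : 0 < c) (hlaw : LogLaw P c) :
    ∃ r₀ : ℕ, ∀ r ≥ r₀, 1 ≤ 50 * (r : ℝ) ^ 4 * P.real (arm r (0, 0)) := by
  have := hP.1
  obtain ⟨N, E, hE, hE'⟩ := hlaw c hc (1 / 2) (by norm_num)
  have hlim : Tendsto (fun r : ℕ => ((c + c) * (2 * Real.log r) + 1) / r) atTop (𝓝 0) := by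
    have h1 : Tendsto (fun r : ℝ => Real.log r / r) atTop (𝓝 0) :=
      Real.isLittleO_log_id_atTop.tendsto_div_nhds_zero
    have h2 : Tendsto (fun r : ℝ => 1 / r) atTop (𝓝 0) := by
      simpa using tendsto_inv_atTop_zero (𝕜 := ℝ)
    have h3 := ((h1.const_mul (4 * c)).add h2).comp tendsto_natCast_atTop_atTop
    simp only [mul_zero, add_zero] at h3
    refine h3.congr fun r => ?_
    simp only [Function.comp]
    ring
  obtain ⟨r₁, hr₁⟩ := eventually_atTop.1 (hlim.eventually (gt_mem_nhds (zero_lt_one' ℝ)))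
  refine ⟨max r₁ (max N 4), fun r hr => ?_⟩
  have hrN : N ≤ r := by omega
  have hr4 : 4 ≤ r := by omega
  have hr4' : (4 : ℝ) ≤ r := by exact_mod_cast hr4
  have h1 := hr₁ r (by omega)
  rw [div_lt_one (by positivity)] at h1
  set k := ⌊(c + c) * Real.log (r ^ 2 : ℕ)⌋₊ with hk
  have hlog : 0 ≤ Real.log (r ^ 2 : ℕ) := Real.log_natCast_nonneg _
  have hk' : (k : ℝ) + 1 < r := by
    have : (k : ℝ) ≤ (c + c) * Real.log (r ^ 2 : ℕ) := Nat.floor_le (by positivity)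
    have e : Real.log (r ^ 2 : ℕ) = 2 * Real.log r := by
      push_cast
      rw [Real.log_pow]
      norm_num
    rw [e] at this
    linarith
  have hk'' : k + 1 < r := by exact_mod_cast hk'
  have hm : (k + 1) * (r + 1) ≤ r ^ 2 := by
    have : (k + 1) * (r + 1) ≤ (r - 1) * (r + 1) := Nat.mul_le_mul_right _ (by omega)
    have h2 : (r - 1) * (r + 1) ≤ r ^ 2 := by
      obtain ⟨s, rfl⟩ : ∃ s, r = s + 1 := ⟨r - 1, by omega⟩
      simp only [Nat.add_sub_cancel]
      nlinarith
    omega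
  have hsub : E ⊆ ⋃ a ∈ box (r ^ 2 + 1), arm r a := by
    intro ω hω
    obtain ⟨a, ha, h⟩ := exists_arm hm (by nlinarith) (hE' ω hω (r ^ 2) (by nlinarith)).1
    exact Set.mem_biUnion ha h
  have h2 := (measureReal_mono hsub (measure_ne_top P _)).trans
    (measureReal_biUnion_finset_le _ _)
  have h3 := h2.trans (Finset.sum_le_card_nsmul _ _ _ fun a _ => real_arm_le hP r a)
  rw [card_box, nsmul_eq_mul] at h3
  have h4 : (((2 * (r ^ 2 + 1) + 1) ^ 2 : ℕ) : ℝ) ≤ 25 * (r : ℝ) ^ 4 := by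
    push_cast
    have : (2 * ((r : ℝ) ^ 2 + 1) + 1) ≤ 5 * (r : ℝ) ^ 2 := by nlinarith
    calc (2 * ((r : ℝ) ^ 2 + 1) + 1) ^ 2 ≤ (5 * (r : ℝ) ^ 2) ^ 2 := by gcongr
      _ = 25 * (r : ℝ) ^ 4 := by ring
  have h5 := mul_le_mul_of_nonneg_right h4 (measureReal_nonneg (μ := P) (s := arm r (0, 0)))
  linarith

/-! ### Blue crossings between two opposite points -/

/-- The origin is joined by blue sites in the ball of radius `r` to a site satisfying `Q`. -/
def ballArm (r : ℕ) (Q : ℤ × ℤ → Prop) : Set Config :=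
  ⋃ b : {b : ℤ × ℤ // Q b}, {ω | Reach ω (hexBall (0, 0) r) 0 (0, 0) b}

theorem mem_ballArm {r : ℕ} {Q : ℤ × ℤ → Prop} {ω : Config} :
    ω ∈ ballArm r Q ↔ ∃ b, Q b ∧ Reach ω (hexBall (0, 0) r) 0 (0, 0) b := by
  simp [ballArm]

theorem blueInc_ballArm (r : ℕ) (Q : ℤ × ℤ → Prop) : BlueInc (ballArm r Q) :=
  BlueInc.iUnion fun _ => blueInc_reach _ _ _ _

theorem real_ballArm_rot (hP : IsBernoulliHalf P) (r : ℕ) (i : ℕ) :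
    P.real (ballArm r fun b => (rot^[i] b).2 = r) ≤ P.real (ballArm r fun b => b.2 = r) := by
  induction i with
  | zero => exact le_rfl
  | succ i ih =>
    refine le_trans (real_le_of_symmetry hP (blueInc_ballArm r _) rot fun ω hω => ?_) ih
    obtain ⟨b, hb, h⟩ := mem_ballArm.1 hω
    refine mem_ballArm.2 ⟨rot b, hb, ?_⟩
    have := h.map (R' := hexBall (0, 0) r) rot_adj fun z hz => by
      simp only [mem_hexBall, rot_apply] at hz ⊢
      omega
    simpa [rot_apply] using this

theorem arm_subset {r : ℕ} (hr : 0 < r) :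
    arm r (0, 0) ⊆ ⋃ i ∈ Finset.range 6, ballArm r fun b => (rot^[i] b).2 = r := by
  intro ω hω
  obtain ⟨b, hb, h⟩ := mem_arm.1 hω
  obtain ⟨u, v, i, j, huv, hv, -, hij, h1, h2⟩ := h.first_hit
    (fun v => v ∉ hexBall (0, 0) ((r : ℤ) - 1)) (by simp only [mem_hexBall]; omega) hb
  have hvr : v ∈ hexBall (0, 0) (r : ℤ) :=
    mem_hexBall_trans (not_not.1 h1.right_mem.2) (mem_hexBall_of_adj huv) (by omega)
  have h3 : Reach ω (hexBall (0, 0) (r : ℤ)) 0 (0, 0) v := by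
    refine ((h1.mono (R' := hexBall (0, 0) (r : ℤ)) ?_ le_rfl).snoc huv hvr).mono subset_rfl ?_
    · exact fun y hy => mem_hexBall_trans (not_not.1 hy.2) (mem_hexBall_self le_rfl) (by omega)
    · have := h2.left_time
      omega
  have h4 : ∃ i < 6, (rot^[i] v).2 = r := by
    simp only [mem_hexBall] at hv hvr
    have h5 : v.2 = r ∨ v.1 + v.2 = r ∨ v.1 = r ∨ -v.2 = r ∨ -(v.1 + v.2) = r ∨ -v.1 = r := by
      omega
    rcases h5 with h | h | h | h | h | h
    · exact ⟨0, by norm_num, h⟩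
    · exact ⟨1, by norm_num, h⟩
    · exact ⟨2, by norm_num, by simp only [Function.iterate_succ_apply, Function.iterate_zero, id, rot_apply]; omega⟩
    · exact ⟨3, by norm_num, by simp only [Function.iterate_succ_apply, Function.iterate_zero, id, rot_apply]; omega⟩
    · exact ⟨4, by norm_num, by simp only [Function.iterate_succ_apply, Function.iterate_zero, id, rot_apply]; omega⟩
    · exact ⟨5, by norm_num, by simp only [Function.iterate_succ_apply, Function.iterate_zero, id, rot_apply]; omega⟩
  obtain ⟨i, hi, hi'⟩ := h4
  exact Set.mem_biUnion (Finset.mem_coe.2 (Finset.mem_range.2 hi)) (mem_ballArm.2 ⟨v, hi', h3⟩)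

/-- Half of a block: a blue path climbing from the origin to row `r`. -/
def halfBlock (r : ℕ) (d : ℤ) : Set Config :=
  {ω | Reach ω ({v | v = (0, 0) ∨ 0 < v.2 ∧ v.2 ≤ r} ∩ hexBall (0, 0) (2 * r)) 0 (0, 0) (d, r)}

theorem blueInc_halfBlock (r : ℕ) (d : ℤ) : BlueInc (halfBlock r d) := blueInc_reach _ _ _ _

theorem ballArm_subset {r : ℕ} (hr : 0 < r) :
    (ballArm r fun b => b.2 = r) ⊆
      ⋃ p ∈ box (2 * r), {ω | (fun v => ω (shift (p.1, 0) v)) ∈ halfBlock r p.2} := by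
  intro ω hω
  obtain ⟨b, hb, h⟩ := mem_ballArm.1 hω
  obtain ⟨u, v, i, j, huv, hv, hvr, hij, h1, h2⟩ := h.symm.first_hit
    (fun v => v.2 ≤ 0) (by omega) (by simp)
  have hu := h1.right_mem.2
  have hv2 : v.2 = 0 := by
    simp only [triGraph_adj] at huv
    simp only [not_le] at hu
    omega
  have h3 : Reach ω ({z | z = v ∨ 0 < z.2 ∧ z.2 ≤ r} ∩ hexBall (0, 0) r) 0 v b := by
    refine (((h1.mono (R' := {z | z = v ∨ 0 < z.2 ∧ z.2 ≤ r} ∩ hexBall (0, 0) r)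
      ?_ le_rfl).snoc huv ⟨Or.inl rfl, hvr⟩).mono subset_rfl ?_).symm
    · intro y hy
      refine ⟨Or.inr ⟨not_le.1 hy.2, ?_⟩, hy.1⟩
      have := hy.1
      simp only [mem_hexBall] at this
      omega
    · have := h2.left_time
      omega
  have hbr := h.right_mem
  have hvr' := hvr
  simp only [mem_hexBall] at hbr hvr'
  refine Set.mem_biUnion (x := (v.1, b.1 - v.1)) ?_ ?_
  · rw [Finset.mem_coe, mem_box]
    push_cast
    omega
  · have h4 := Reach.map (ω := fun z => ω (shift (v.1, 0) z)) (f := shift (-v.1, 0))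
      (R' := {v | v = (0, 0) ∨ 0 < v.2 ∧ v.2 ≤ r} ∩ hexBall (0, 0) (2 * r))
      (R := {z | z = v ∨ 0 < z.2 ∧ z.2 ≤ r} ∩ hexBall (0, 0) r) (k := 0) (u := v) (v := b)
      (shift_adj _) (by simpa [shift_apply] using h3) (by
        rintro z ⟨hz, hz'⟩
        simp only [mem_hexBall] at hz'
        simp only [Set.mem_inter_iff, Set.mem_ofPred_eq, mem_hexBall, shift_apply, Prod.ext_iff]
          at hz ⊢
        omega)
    have e1 : shift (-v.1, 0) v = (0, 0) := by
      simp only [shift_apply, Prod.ext_iff]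
      omega
    have e2 : shift (-v.1, 0) b = (b.1 - v.1, (r : ℤ)) := by
      simp only [shift_apply, Prod.ext_iff]
      omega
    rwa [e1, e2] at h4

/-- A blue path from `0` to `i√3·r` staying between the two hyperplanes and near the origin. -/
def block (r : ℕ) : Set Config :=
  {ω | Reach ω (cyl r ∩ hexBall (0, 0) (4 * r)) 0 (0, 0) (top r)}

theorem blueInc_block (r : ℕ) : BlueInc (block r) := blueInc_reach _ _ _ _

theorem real_block_ge_sq (hP : IsBernoulliHalf P) (r : ℕ) (d : ℤ) :
    P.real (halfBlock r d) ^ 2 ≤ P.real (block r) := by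
  have := hP.1
  have h1 := blueInc_halfBlock r d
  have h2 := harris hP h1 (h1.preimage (flipRow r))
  rw [h1.real_preimage hP, ← sq] at h2
  refine h2.trans (measureReal_mono (fun ω hω => ?_) (measure_ne_top P _))
  have h3 := Reach.map (R' := cyl r ∩ hexBall (0, 0) (4 * r)) (flipRow_adj r) hω.2 (by
    rintro z ⟨hz, hz'⟩
    simp only [mem_hexBall] at hz'
    simp only [Set.mem_inter_iff, Set.mem_ofPred_eq, mem_hexBall, cyl, top, flipRow_apply,
      Prod.ext_iff] at hz ⊢
    omega)
  have e : flipRow r (d, r) = (d, (r : ℤ)) := by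
    simp only [flipRow_apply, Prod.ext_iff]
    omega
  have e' : flipRow r (0, 0) = top r := by
    simp only [flipRow_apply, top, Prod.ext_iff]
    omega
  rw [e, e'] at h3
  have h4 := Reach.mono (R' := cyl r ∩ hexBall (0, 0) (4 * r)) hω.1 (by
    rintro z ⟨hz, hz'⟩
    simp only [mem_hexBall] at hz'
    simp only [Set.mem_inter_iff, Set.mem_ofPred_eq, mem_hexBall, cyl, top,
      Prod.ext_iff] at hz ⊢
    omega) le_rfl
  exact h4.trans h3.symm

theorem real_block_ge {c : ℝ} (hP : IsBernoulliHalf P) (hc : 0 < c) (hlaw : LogLaw P c) :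
    ∃ r₀ : ℕ, ∀ r ≥ r₀, 1 ≤ (r : ℝ) ^ 13 * P.real (block r) := by
  have := hP.1
  obtain ⟨r₀, hr₀⟩ := real_arm_ge hP hc hlaw
  refine ⟨max r₀ (7500 ^ 2), fun r hr => ?_⟩
  have h1 := hr₀ r (by omega)
  have hr' : 7500 ^ 2 ≤ r := by omega
  have hr1 : (7500 ^ 2 : ℝ) ≤ r := by exact_mod_cast hr'
  have hr0 : 0 < r := by omega
  obtain ⟨d, hd⟩ : ∃ d, P.real (ballArm r fun b => b.2 = r) ≤
      (4 * r + 1 : ℝ) ^ 2 * P.real (halfBlock r d) := by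
    by_contra! hcon
    have h2 := (measureReal_mono (ballArm_subset hr0) (measure_ne_top P _)).trans
      (measureReal_biUnion_finset_le _ _)
    have h4 : P.real (ballArm r fun b => b.2 = r) * (4 * r + 1 : ℝ) ^ 2 >
        ∑ p ∈ box (2 * r), (4 * r + 1 : ℝ) ^ 2 *
          P.real {ω | (fun v => ω (shift (p.1, 0) v)) ∈ halfBlock r p.2} := by
      have : P.real (ballArm r fun b => b.2 = r) * (4 * r + 1 : ℝ) ^ 2 =
          ∑ p ∈ box (2 * r), P.real (ballArm r fun b => b.2 = r) := by
        rw [Finset.sum_const, card_box, nsmul_eq_mul]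
        push_cast
        ring
      rw [this]
      refine Finset.sum_lt_sum_of_nonempty ⟨(0, 0), mem_box.2 (by push_cast; omega)⟩ fun p _ => ?_
      rw [(blueInc_halfBlock r p.2).real_preimage hP]
      exact hcon p.2
    rw [← Finset.mul_sum] at h4
    have h5 : (0 : ℝ) < (4 * r + 1 : ℝ) ^ 2 := by positivity
    nlinarith
  have h2 := (measureReal_mono (arm_subset hr0) (measure_ne_top P _)).trans
      (measureReal_biUnion_finset_le _ _)
  have h3 := h2.trans (Finset.sum_le_card_nsmul _ _ _ fun i _ => real_ballArm_rot hP r i)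
  rw [Finset.card_range, nsmul_eq_mul] at h3
  push_cast at h3
  have h6 := real_block_ge_sq hP r d
  set x := P.real (halfBlock r d)
  have hx : 0 ≤ x := measureReal_nonneg
  have h7 : (4 * r + 1 : ℝ) ^ 2 * x ≤ 25 * r ^ 2 * x := by
    gcongr
    nlinarith
  have h8 : 1 ≤ 7500 * (r : ℝ) ^ 6 * x := by
    have : 50 * (r : ℝ) ^ 4 * P.real (arm r (0, 0)) ≤ 50 * (r : ℝ) ^ 4 * (6 * (25 * r ^ 2 * x)) := by
      gcongr
      linarith
    calc 1 ≤ _ := h1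
      _ ≤ _ := this
      _ = _ := by ring
  calc (1 : ℝ) ≤ (7500 * (r : ℝ) ^ 6 * x) ^ 2 := one_le_pow₀ h8
    _ = 7500 ^ 2 * (r : ℝ) ^ 12 * x ^ 2 := by ring
    _ ≤ r * (r : ℝ) ^ 12 * P.real (block r) := by gcongr
    _ = _ := by ring

/-! ### Paths leaving a wide box -/

theorem Reach.of_mem_support {ω : Config} {R : Set (ℤ × ℤ)} {k : ℕ} {u v z : ℤ × ℤ}
    {w : triGraph.Walk u v} (hR : ∀ z ∈ w.support, z ∈ R) (hk : pathTime ω w.support ≤ k)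
    (hz : z ∈ w.support) : Reach ω R k u z ∧ Reach ω R k z v := by
  obtain ⟨p, q, hp, hq, h⟩ := walk_split ω w hz
  have h1 := siteTime_le_pathTime ω (l := p.support) (v := z) (by simp)
  have h2 := siteTime_le_pathTime ω (l := q.support) (v := z) (by simp)
  exact ⟨⟨p, fun y hy => hR y (hp y hy), by omega⟩, ⟨q, fun y hy => hR y (hq y hy), by omega⟩⟩

theorem DetBy.preimage {S : Finset (ℤ × ℤ)} {A : Set Config} (h : DetBy S A) (g : ℤ × ℤ ≃ ℤ × ℤ) :
    DetBy (S.map g.toEmbedding) {ω | (fun v => ω (g v)) ∈ A} := fun _ _ hω =>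
  h _ _ fun v hv => hω _ (Finset.mem_map.2 ⟨v, hv, rfl⟩)

/-- The open strip between the hyperplanes `0` and `r`, together with the origin. -/
def strip (r : ℕ) : Set (ℤ × ℤ) := {v | v = (0, 0) ∨ 0 < v.2 ∧ v.2 < 2 * r}

theorem mem_strip {r : ℕ} {v : ℤ × ℤ} :
    v ∈ strip r ↔ v = (0, 0) ∨ 0 < v.2 ∧ v.2 < 2 * r := Iff.rfl

/-- The origin is joined within the strip, at cost `k`, to a site satisfying `Q`. -/
def stripArm (r k : ℕ) (Q : ℤ × ℤ → Prop) : Set Config :=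
  ⋃ z : {z : ℤ × ℤ // Q z}, {ω | Reach ω (strip r) k (0, 0) z}

theorem mem_stripArm {r k : ℕ} {Q : ℤ × ℤ → Prop} {ω : Config} :
    ω ∈ stripArm r k Q ↔ ∃ b, Q b ∧ Reach ω (strip r) k (0, 0) b := by
  simp [stripArm]

theorem blueInc_stripArm (r k : ℕ) (Q : ℤ × ℤ → Prop) : BlueInc (stripArm r k Q) :=
  BlueInc.iUnion fun _ => blueInc_reach _ _ _ _

theorem flipRow_zero (r : ℕ) : flipRow r (0, 0) = top r := by
  simp only [flipRow_apply, top, Prod.ext_iff]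
  omega

theorem exists_reach_of_flipRow {r k : ℕ} {Q : ℤ × ℤ → Prop} {ω : Config}
    (h : (fun v => ω (flipRow r v)) ∈ stripArm r k Q) :
    ∃ b, Q b ∧ Reach ω {v | v = top r ∨ 0 < v.2 ∧ v.2 < 2 * r} k (top r) (flipRow r b) := by
  obtain ⟨b, hb, h⟩ := mem_stripArm.1 h
  refine ⟨b, hb, ?_⟩
  rw [← flipRow_zero]
  refine h.map (flipRow_adj r) fun z hz => ?_
  simp only [Set.mem_ofPred_eq, mem_strip, flipRow_apply, Prod.ext_iff] at hz ⊢
  omega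

theorem strip_subset_cyl (r : ℕ) : strip r ⊆ cyl r := by
  rintro z (hz | hz)
  · exact Or.inl hz
  · exact Or.inr (Or.inr hz)

theorem flip_strip_subset_cyl (r : ℕ) : {v : ℤ × ℤ | v = top r ∨ 0 < v.2 ∧ v.2 < 2 * r} ⊆ cyl r := by
  rintro z (hz | hz)
  · exact Or.inr (Or.inl hz)
  · exact Or.inr (Or.inr hz)

theorem reach_of_top_right {r k : ℕ} (hr : 0 < r) {ω : Config}
    (h : ω ∈ stripArm r k fun z => z.2 = 2 * r - 1 ∧ 0 < 2 * z.1 + z.2)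
    (h' : (fun v => ω (flipRow r v)) ∈
      stripArm r k fun z => z.2 = 2 * r - 1 ∧ 0 < 2 * z.1 + z.2) :
    Reach ω (cyl r) (2 * k) (0, 0) (top r) := by
  obtain ⟨z, ⟨hz, hz'⟩, γ, hγ, hγk⟩ := mem_stripArm.1 h
  obtain ⟨y, ⟨hy, hy'⟩, β, hβ, hβk⟩ := exists_reach_of_flipRow h'
  have hyf : flipRow r y = (y.1 + r - 1, 1) := by
    simp only [flipRow_apply, Prod.ext_iff]
    omega
  have a1 : triGraph.Adj (flipRow r y) (y.1 + r, 0) := by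
    rw [hyf, triGraph_adj]
    omega
  have a2 : triGraph.Adj z (z.1, 2 * (r : ℤ)) := by
    rw [triGraph_adj]
    simp only [true_and]
    omega
  obtain ⟨x, hx, hx'⟩ := crossing_of_rays (β.concat a1) (γ.concat a2) 0 (2 * r)
    (by
      intro x hx
      rw [SimpleGraph.Walk.support_concat, List.mem_append, List.mem_singleton] at hx
      rcases hx with hx | rfl
      · have := hβ x hx
        simp only [Set.mem_ofPred_eq, top, Prod.ext_iff] at this
        omega
      · simp)
    (by simp) (by simp)
    (by
      intro x hx hx2
      rw [SimpleGraph.Walk.support_concat, List.mem_append, List.mem_singleton] at hx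
      simp only [top] at hx2 ⊢
      rcases hx with hx | rfl
      · have := hγ x hx
        simp only [mem_strip, Prod.ext_iff] at this
        omega
      · simp only
        omega)
    (by
      intro x hx hx2
      rw [SimpleGraph.Walk.support_concat, List.mem_append, List.mem_singleton] at hx
      simp only at hx2 ⊢
      rcases hx with hx | rfl
      · have := hγ x hx
        simp only [mem_strip, Prod.ext_iff] at this
        omega
      · simp only at hx2
        omega)
  rw [SimpleGraph.Walk.support_concat, List.mem_append, List.mem_singleton] at hx hx'
  have hxβ : x ∈ β.support := by
    rcases hx with hx | rfl
    · exact hx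
    · exfalso
      rcases hx' with hx' | hx'
      · have := hγ _ hx'
        simp only [mem_strip, Prod.ext_iff] at this
        omega
      · simp only [Prod.ext_iff] at hx'
        omega
  have hxγ : x ∈ γ.support := by
    rcases hx' with hx' | rfl
    · exact hx'
    · exfalso
      have := hβ _ hxβ
      simp only [Set.mem_ofPred_eq, top, Prod.ext_iff] at this
      omega
  have r1 := ((Reach.of_mem_support hγ hγk hxγ).1).mono (strip_subset_cyl r) le_rfl
  have r2 := ((Reach.of_mem_support hβ hβk hxβ).1).mono (flip_strip_subset_cyl r) le_rfl
  exact (r1.trans r2.symm).mono subset_rfl (by omega)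

/-- A blue crossing of the strip near `(a, 0)`. -/
theorem exists_walk_of_block {r : ℕ} (hr : 0 < r) {ω : Config} {p : ℤ × ℤ} (hp : p.2 = 0)
    (h : (fun v => ω (shift p v)) ∈ block r) :
    ∃ (a b : ℤ × ℤ) (w : triGraph.Walk a b), a.2 = 1 ∧ b.2 = 2 * r - 1 ∧
      (∀ z ∈ w.support, (0 < z.2 ∧ z.2 < 2 * r) ∧ z ∈ hexBall p (4 * r)) ∧
      pathTime ω w.support = 0 := by
  have h1 : Reach ω ({z | 0 ≤ z.2 ∧ z.2 ≤ 2 * r} ∩ hexBall p (4 * r)) 0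
      (shift p (0, 0)) (shift p (top r)) := by
    refine Reach.map (shift_adj p) h fun z hz => ?_
    simp only [cyl, top, Set.mem_inter_iff, Set.mem_ofPred_eq, mem_hexBall, shift_apply,
      Prod.ext_iff] at hz ⊢
    omega
  obtain ⟨a, a', i, j, haa, ha', -, hij, h2, -⟩ := h1.symm.first_hit (fun v => v.2 ≤ 0)
    (by simp only [shift_apply, top]; omega) (by simp only [shift_apply]; omega)
  obtain ⟨b, b', i', j', hbb, hb', -, hij', ⟨w, hw, hw'⟩, -⟩ := h2.symm.first_hit
    (fun v => 2 * (r : ℤ) ≤ v.2)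
    (by simp only [triGraph_adj] at haa; omega) (by simp only [shift_apply, top]; omega)
  have ha := h2.right_mem.2
  have hb := hw b (by simp)
  simp only [Set.mem_ofPred_eq, Set.mem_inter_iff] at ha hb
  refine ⟨a, b, w, ?_, ?_, fun z hz => ?_, by omega⟩
  · simp only [triGraph_adj] at haa
    omega
  · simp only [triGraph_adj] at hbb
    omega
  · have := hw z hz
    simp only [Set.mem_ofPred_eq, Set.mem_inter_iff] at this
    exact ⟨⟨by omega, by omega⟩, this.1.1.2⟩

theorem reach_of_right_block {r k : ℕ} (hr : 0 < r) {W : ℤ} {ω : Config}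
    (h : ω ∈ stripArm r k fun z => W ≤ 2 * z.1 + z.2)
    (h' : (fun v => ω (flipRow r v)) ∈ stripArm r k fun z => W ≤ 2 * z.1 + z.2)
    {a : ℤ} (ha : 12 * (r : ℤ) + 1 < 2 * a) (ha' : 2 * a + 12 * r + 1 < W)
    (hblock : (fun v => ω (shift (a, 0) v)) ∈ block r) :
    Reach ω (cyl r) (2 * k) (0, 0) (top r) := by
  obtain ⟨z, hz, γ, hγ, hγk⟩ := mem_stripArm.1 h
  obtain ⟨y, hy, β, hβ, hβk⟩ := exists_reach_of_flipRow h'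
  obtain ⟨p, q, w, hp, hq, hw, hw0⟩ := exists_walk_of_block hr rfl hblock
  have hw' : ∀ z ∈ w.support, 1 < 2 * z.1 + z.2 ∧ 2 * z.1 + z.2 + 1 < W := fun z hz => by
    have := (hw z hz).2
    simp only [mem_hexBall] at this
    omega
  have a1 : triGraph.Adj (p.1, 0) p := by
    rw [triGraph_adj]
    simp only [true_and]
    omega
  have a2 : triGraph.Adj q (q.1, 2 * (r : ℤ)) := by
    rw [triGraph_adj]
    simp only [true_and]
    omega
  set c := (SimpleGraph.Walk.cons a1 w).concat a2 with hc
  have hcmem : ∀ x, x ∈ c.support ↔ x = (p.1, 0) ∨ x ∈ w.support ∨ x = (q.1, 2 * (r : ℤ)) := by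
    intro x
    rw [hc, SimpleGraph.Walk.support_concat, List.mem_append, List.mem_singleton, SimpleGraph.Walk.support_cons,
      List.mem_cons, or_assoc]
  have hcW : ∀ z ∈ c.support, 0 < 2 * z.1 + z.2 ∧ 2 * z.1 + z.2 < W := by
    have hp' := hw' p (by simp)
    have hq' := hw' q (by simp)
    intro z hz
    rcases (hcmem z).1 hz with rfl | hz | rfl
    · simp only
      omega
    · have := hw' z hz
      omega
    · simp only
      omega
  have hmeet : ∀ {s t : ℤ × ℤ} (l : triGraph.Walk s t), 2 * s.1 + s.2 = 0 → W ≤ 2 * t.1 + t.2 →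
      (∀ x ∈ l.support, x = s ∨ 0 < x.2 ∧ x.2 < 2 * r) → (0 ≤ s.2 ∧ s.2 ≤ 2 * r) →
      ∃ x, x ∈ l.support ∧ x ∈ w.support := by
    intro s t l hs ht hl hs2
    obtain ⟨x, hx, hx'⟩ := crossing_of_rays l c 0 (2 * r)
      (by
        intro x hx
        rcases hl x hx with rfl | h
        · exact hs2
        · omega)
      le_rfl le_rfl
      (by
        intro x hx hx2
        have := hcW x hx
        omega)
      (by
        intro x hx hx2
        have := hcW x hx
        omega)
    refine ⟨x, hx, ?_⟩
    have h1 := hcW x hx'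
    have h2 : 0 < x.2 ∧ x.2 < 2 * r := (hl x hx).resolve_left (by rintro rfl; omega)
    rcases (hcmem x).1 hx' with rfl | h | rfl
    · simp at h2
    · exact h
    · simp at h2
  obtain ⟨x, hx, hxw⟩ := hmeet γ (by simp) hz (fun x hx => by simpa [mem_strip] using hγ x hx)
    (by simp)
  obtain ⟨x', hx', hxw'⟩ := hmeet β (by simp [top]) (by simp only [flipRow_apply]; omega)
    (fun x hx => by simpa using hβ x hx) (by simp [top])
  have hwR : ∀ z ∈ w.support, z ∈ cyl r := fun z hz => Or.inr (Or.inr (hw z hz).1)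
  have r1 := ((Reach.of_mem_support hγ hγk hx).1).mono (strip_subset_cyl r) le_rfl
  have r2 := ((Reach.of_mem_support hβ hβk hx').1).mono (flip_strip_subset_cyl r) le_rfl
  have r3 := (Reach.of_mem_support hwR hw0.le hxw).1
  have r4 := (Reach.of_mem_support hwR hw0.le hxw').1
  exact (((r1.trans r3.symm).trans r4).trans r2.symm).mono subset_rfl (by omega)

/-- The starting point of the `i`-th block. -/
theorem exists_block {r : ℕ} (hP : IsBernoulliHalf P) (hr : 40 ≤ r)
    (hV : 1 ≤ (r : ℝ) ^ 13 * P.real (block r)) :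
    1 / 8 ≤ P.real (⋃ i ∈ Finset.range (r ^ 13),
      {ω : Config | (fun v => ω (shift (10 * r * (i + 1), 0) v)) ∈ block r}) := by
  have := hP.1
  have hdet : DetBy (box (4 * r)) (block r) := detBy_reach _ (fun z hz => by
    have := hz.2
    simp only [mem_hexBall] at this
    rw [Finset.mem_coe, mem_box]
    push_cast
    omega) _ _ _
  have h := real_iUnion_inter_ge hP (A := fun _ => Set.univ) (M := r ^ 13)
    (B := fun i => {ω : Config | (fun v => ω (shift (10 * r * (i + 1), 0) v)) ∈ block r})
    (U := fun i => (box (4 * r)).map (shift (10 * r * (i + 1), 0)).toEmbedding)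
    (Q := P.real (block r)) (fun _ => blueInc_univ) (fun _ _ => by norm_num)
    (fun i => ((blueInc_block r).preimage _).2) (fun i => hdet.preimage _) ?_
    (fun i => by rw [(blueInc_block r).real_preimage hP]) (by exact_mod_cast hV)
  · simpa using h
  · intro i j hij
    rw [Finset.disjoint_left]
    intro x hx hx'
    simp only [Finset.mem_map, mem_box, Equiv.toEmbedding_apply, shift_apply] at hx hx'
    obtain ⟨u, hu, rfl⟩ := hx
    obtain ⟨v, hv, huv⟩ := hx'
    simp only [Prod.ext_iff] at huv
    push_cast at hu hv huv
    have : (r : ℤ) * (i + 1) ≤ r * j := by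
      have : (i : ℤ) + 1 ≤ j := by exact_mod_cast hij
      gcongr
    nlinarith

theorem real_top_right_le (hP : IsBernoulliHalf P) {r k : ℕ} (hr : 0 < r)
    (hb : P.real {ω | Reach ω (cyl r) (2 * k) (0, 0) (top r)} ≤ 1 / 10000) :
    P.real (stripArm r k fun z => z.2 = 2 * r - 1 ∧ 0 < 2 * z.1 + z.2) ≤ 1 / 100 := by
  have := hP.1
  have h1 := blueInc_stripArm r k fun z => z.2 = 2 * r - 1 ∧ 0 < 2 * z.1 + z.2
  have h2 := harris hP h1 (h1.preimage (flipRow r))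
  rw [h1.real_preimage hP] at h2
  have h3 := (h2.trans (measureReal_mono (fun ω hω => reach_of_top_right hr hω.1 hω.2)
    (measure_ne_top P _))).trans hb
  nlinarith

theorem real_right_le (hP : IsBernoulliHalf P) {r k : ℕ} (hr : 40 ≤ r)
    (hV : 1 ≤ (r : ℝ) ^ 13 * P.real (block r))
    (hb : P.real {ω | Reach ω (cyl r) (2 * k) (0, 0) (top r)} ≤ 1 / 10000) :
    P.real (stripArm r k fun z => (r : ℤ) ^ 15 ≤ 2 * z.1 + z.2) ≤ 1 / 30 := by
  have := hP.1
  have h1 := blueInc_stripArm r k fun z => (r : ℤ) ^ 15 ≤ 2 * z.1 + z.2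
  have h2 := harris hP h1 (h1.preimage (flipRow r))
  have hbl := exists_block hP hr hV
  set D := ⋃ i ∈ Finset.range (r ^ 13),
      {ω : Config | (fun v => ω (shift (10 * r * (i + 1), 0) v)) ∈ block r} with hD
  have h3 := harris hP (h1.inter (h1.preimage (flipRow r))) (B := D)
    (BlueInc.iUnion fun i => BlueInc.iUnion fun _ => (blueInc_block r).preimage _)
  rw [h1.real_preimage hP] at h2
  have h4 := (h3.trans (measureReal_mono (fun ω hω => ?_) (measure_ne_top P _))).trans hb
  · nlinarith
  · obtain ⟨⟨hω, hω'⟩, hωD⟩ := hω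
    simp only [hD, Set.mem_iUnion, Finset.mem_range, exists_prop] at hωD
    obtain ⟨i, hi, hωi⟩ := hωD
    have hr' : (40 : ℤ) ≤ r := by exact_mod_cast hr
    have hi' : (i : ℤ) + 1 ≤ (r : ℤ) ^ 13 := by exact_mod_cast hi
    refine reach_of_right_block (by omega) hω hω' (a := 10 * r * (i + 1)) ?_ ?_ hωi
    · nlinarith
    · have e1 : (r : ℤ) * (i + 1) ≤ r * r ^ 13 := by gcongr
      have e2 : (r : ℤ) ≤ r * r ^ 13 := le_mul_of_one_le_right (by omega) (one_le_pow₀ (by omega))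
      have e3 : 0 < (r : ℤ) * r ^ 13 := by positivity
      have e4 : (33 : ℤ) * (r * r ^ 13) ≤ r * (r * r ^ 13) :=
        mul_le_mul_of_nonneg_right (by omega) e3.le
      have : (r : ℤ) ^ 15 = r * (r * r ^ 13) := by ring
      rw [this]
      nlinarith

/-- It is unlikely to reach the far side of the strip, or to travel far, at low cost. -/
theorem real_exit_le (hP : IsBernoulliHalf P) {r k : ℕ} (hr : 40 ≤ r)
    (hV : 1 ≤ (r : ℝ) ^ 13 * P.real (block r))
    (hb : P.real {ω | Reach ω (cyl r) (2 * k) (0, 0) (top r)} ≤ 1 / 10000) :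
    P.real (stripArm r k fun z => z.2 = 2 * r - 1 ∨ (r : ℤ) ^ 15 ≤ |2 * z.1 + z.2|) ≤ 1 / 10 := by
  have := hP.1
  set A := stripArm r k fun z => z.2 = 2 * r - 1 ∧ 0 < 2 * z.1 + z.2
  set B := stripArm r k fun z => (r : ℤ) ^ 15 ≤ 2 * z.1 + z.2
  have hA := blueInc_stripArm r k fun z => z.2 = 2 * r - 1 ∧ 0 < 2 * z.1 + z.2
  have hB := blueInc_stripArm r k fun z => (r : ℤ) ^ 15 ≤ 2 * z.1 + z.2
  have hA1 : P.real A ≤ 1 / 100 := real_top_right_le hP (by omega) hb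
  have hB1 : P.real B ≤ 1 / 30 := real_right_le hP (by omega) hV hb
  have hA2 := hA.real_preimage hP flipCol
  have hB2 := hB.real_preimage hP flipCol
  have hsub : (stripArm r k fun z => z.2 = 2 * r - 1 ∨ (r : ℤ) ^ 15 ≤ |2 * z.1 + z.2|) ⊆
      (A ∪ B) ∪ ({ω : Config | (fun v => ω (flipCol v)) ∈ A} ∪
        {ω : Config | (fun v => ω (flipCol v)) ∈ B}) := by
    intro ω hω
    obtain ⟨z, hz, h⟩ := mem_stripArm.1 hω
    have h' : Reach (fun v => ω (flipCol v)) (strip r) k (0, 0) (flipCol z) := by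
      have e : ∀ v, flipCol (flipCol v) = v := flipCol.left_inv
      have h1 := Reach.map (ω := fun v => ω (flipCol v)) (R := strip r) (R' := strip r) (k := k)
        (u := (0, 0)) (v := z) flipCol_adj (by simpa only [e] using h) fun v hv => by
          simp only [mem_strip, flipCol_apply, Prod.ext_iff] at hv ⊢
          omega
      simpa [flipCol_apply] using h1
    rw [le_abs] at hz
    rcases hz with hz | hz | hz
    · rcases lt_trichotomy 0 (2 * z.1 + z.2) with h0 | h0 | h0
      · exact Or.inl (Or.inl (mem_stripArm.2 ⟨z, ⟨hz, h0⟩, h⟩))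
      · omega
      · refine Or.inr (Or.inl (mem_stripArm.2 ⟨flipCol z, ⟨hz, ?_⟩, h'⟩))
        simp only [flipCol_apply]
        omega
    · exact Or.inl (Or.inr (mem_stripArm.2 ⟨z, hz, h⟩))
    · refine Or.inr (Or.inr (mem_stripArm.2 ⟨flipCol z, ?_, h'⟩))
      simp only [flipCol_apply]
      omega
  have h1 := measureReal_mono hsub (measure_ne_top P _)
  have h2 := measureReal_union_le (μ := P) (A ∪ B) ({ω : Config | (fun v => ω (flipCol v)) ∈ A} ∪
        {ω : Config | (fun v => ω (flipCol v)) ∈ B})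
  have h3 := measureReal_union_le (μ := P) A B
  have h4 := measureReal_union_le (μ := P) {ω : Config | (fun v => ω (flipCol v)) ∈ A}
        {ω : Config | (fun v => ω (flipCol v)) ∈ B}
  linarith

/-! ### Hooks -/

/-- The `j`-th block of a leg which starts at `s` and moves along `d`. -/
def legMap (R : ℕ) (g : ℤ × ℤ ≃ ℤ × ℤ) (s d : ℤ × ℤ) (j : ℕ) : ℤ × ℤ ≃ ℤ × ℤ :=
  g.trans (shift (s.1 + R * j * d.1, s.2 + R * j * d.2))

theorem legMap_apply (R : ℕ) (g : ℤ × ℤ ≃ ℤ × ℤ) (s d : ℤ × ℤ) (j : ℕ) (v : ℤ × ℤ) :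
    legMap R g s d j v = ((g v).1 + (s.1 + R * j * d.1), (g v).2 + (s.2 + R * j * d.2)) := rfl

/-- A succession of `m` blocks, each one starting where the previous one ends. -/
def leg (R : ℕ) (g : ℤ × ℤ ≃ ℤ × ℤ) (s d : ℤ × ℤ) (m : ℕ) : Set Config :=
  {ω | ∀ j < m, (fun v => ω (legMap R g s d j v)) ∈ block R}

theorem leg_succ (R : ℕ) (g : ℤ × ℤ ≃ ℤ × ℤ) (s d : ℤ × ℤ) (m : ℕ) :
    leg R g s d (m + 1) = leg R g s d m ∩ {ω | (fun v => ω (legMap R g s d m v)) ∈ block R} := by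
  ext ω
  simp only [leg, Set.mem_ofPred_eq, Set.mem_inter_iff, Nat.lt_succ_iff_lt_or_eq]
  constructor
  · exact fun h => ⟨fun j hj => h j (Or.inl hj), h m (Or.inr rfl)⟩
  · rintro ⟨h, h'⟩ j (hj | rfl)
    exacts [h j hj, h']

theorem blueInc_leg (R : ℕ) (g : ℤ × ℤ ≃ ℤ × ℤ) (s d : ℤ × ℤ) (m : ℕ) :
    BlueInc (leg R g s d m) := by
  induction m with
  | zero =>
    convert blueInc_univ
    ext ω
    simp [leg]
  | succ m ih =>
    rw [leg_succ]
    exact ih.inter ((blueInc_block R).preimage _)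

theorem real_leg_ge (hP : IsBernoulliHalf P) (R : ℕ) (g : ℤ × ℤ ≃ ℤ × ℤ) (s d : ℤ × ℤ) (m : ℕ) :
    P.real (block R) ^ m ≤ P.real (leg R g s d m) := by
  have := hP.1
  induction m with
  | zero =>
    have : leg R g s d 0 = Set.univ := by
      ext ω
      simp [leg]
    simp [this]
  | succ m ih =>
    rw [leg_succ]
    refine le_trans ?_ (harris hP (blueInc_leg R g s d m) ((blueInc_block R).preimage _))
    rw [(blueInc_block R).real_preimage hP, pow_succ]
    gcongr

theorem detBy_leg {R : ℕ} {g : ℤ × ℤ ≃ ℤ × ℤ} {s d : ℤ × ℤ} {m : ℕ} {U : Finset (ℤ × ℤ)}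
    (hU : ∀ j < m, ∀ v ∈ hexBall (0, 0) (4 * R), legMap R g s d j v ∈ U) :
    DetBy U (leg R g s d m) := by
  have h1 : DetBy U (⋂ j : Fin m, {ω : Config | (fun v => ω (legMap R g s d j v)) ∈ block R}) := by
    intro ω ω' h
    simp only [Set.mem_iInter, Set.mem_ofPred_eq]
    refine forall_congr' fun j => ?_
    classical
    refine detBy_reach ((box (4 * R)).filter (· ∈ hexBall (0, 0) (4 * (R : ℤ)))) (fun z hz => ?_) _ _ _
      _ _ fun v hv => h _ (hU j j.2 v (Finset.mem_filter.1 hv).2)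
    have h2 := hz.2
    simp only [mem_hexBall] at h2
    rw [Finset.mem_coe, Finset.mem_filter, mem_box]
    refine ⟨?_, hz.2⟩
    push_cast
    omega
  intro ω ω' h
  have := h1 ω ω' h
  simpa [leg, Fin.forall_iff] using this

theorem reach_of_leg {R : ℕ} {g : ℤ × ℤ ≃ ℤ × ℤ} {s d : ℤ × ℤ} {m : ℕ} {T : Set (ℤ × ℤ)}
    (hg : ∀ a b, triGraph.Adj a b → triGraph.Adj (g a) (g b)) (hg0 : g (0, 0) = (0, 0))
    (hgt : g (top R) = (R * d.1, R * d.2)) {ω : Config} (h : ω ∈ leg R g s d (m + 1))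
    (hT : ∀ j < m + 1, ∀ v ∈ cyl R ∩ hexBall (0, 0) (4 * R), legMap R g s d j v ∈ T) :
    Reach ω T 0 s (s.1 + R * (m + 1) * d.1, s.2 + R * (m + 1) * d.2) := by
  have step : ∀ j < m + 1, Reach ω T 0 (s.1 + R * j * d.1, s.2 + R * j * d.2)
      (s.1 + R * (j + 1) * d.1, s.2 + R * (j + 1) * d.2) := by
    intro j hj
    have h1 := Reach.map (f := legMap R g s d j) (fun a b hab => shift_adj _ _ _ (hg a b hab))
      (h j hj) (hT j hj)
    rw [legMap_apply, legMap_apply, hg0, hgt] at h1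
    convert h1 using 2 <;> ring
  induction m with
  | zero => simpa using step 0 (by omega)
  | succ m ih =>
    have h1 := ih (fun j hj => h j (by omega)) (fun j hj => hT j (by omega))
      (fun j hj => step j (by omega))
    have h2 := step (m + 1) (by omega)
    push_cast at h2 ⊢
    exact h1.trans h2

theorem rot_symm_apply (v : ℤ × ℤ) : rot.symm v = (v.1 + v.2, -v.1) := rfl

theorem rot_symm_adj (u v : ℤ × ℤ) (h : triGraph.Adj u v) :
    triGraph.Adj (rot.symm u) (rot.symm v) := by
  simp only [triGraph_adj, rot_symm_apply] at h ⊢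
  omega

/-- Inverse rotation by `2π/3`. -/
def rotTwo : ℤ × ℤ ≃ ℤ × ℤ := rot.symm.trans rot.symm

theorem rotTwo_apply (v : ℤ × ℤ) : rotTwo v = (v.1 + v.2 + -v.1, -(v.1 + v.2)) := rfl

theorem rotTwo_adj (u v : ℤ × ℤ) (h : triGraph.Adj u v) : triGraph.Adj (rotTwo u) (rotTwo v) := by
  simp only [triGraph_adj, rotTwo_apply] at h ⊢
  omega

/-- A blue path around the point `i√3·n`, ending at `i√3·(n + 8R)`. -/
def hook (n R : ℕ) : Set Config :=
  (leg R (Equiv.refl _) (-n - 6 * R, 2 * n + 12 * R) (-1, 2) 2 ∩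
    leg R rot.symm (-n - 17 * R, 2 * n + R) (1, 1) 11) ∩
  (leg R rotTwo (-n - 17 * R, 2 * n + R) (2, -1) 11 ∩
    leg R rot.symm (-n + 5 * R, 2 * n - 10 * R) (1, 1) 11)

theorem blueInc_hook (n R : ℕ) : BlueInc (hook n R) :=
  ((blueInc_leg _ _ _ _ _).inter (blueInc_leg _ _ _ _ _)).inter
    ((blueInc_leg _ _ _ _ _).inter (blueInc_leg _ _ _ _ _))

theorem real_hook_ge (hP : IsBernoulliHalf P) (n R : ℕ) :
    P.real (block R) ^ 35 ≤ P.real (hook n R) := by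
  have h1 := harris hP (blueInc_leg R (Equiv.refl _) (-n - 6 * R, 2 * n + 12 * R) (-1, 2) 2)
    (blueInc_leg R rot.symm (-n - 17 * R, 2 * n + R) (1, 1) 11)
  have h2 := harris hP (blueInc_leg R rotTwo (-n - 17 * R, 2 * n + R) (2, -1) 11)
    (blueInc_leg R rot.symm (-n + 5 * R, 2 * n - 10 * R) (1, 1) 11)
  refine le_trans ?_ (harris hP
    ((blueInc_leg _ _ _ _ _).inter (blueInc_leg _ _ _ _ _))
    ((blueInc_leg _ _ _ _ _).inter (blueInc_leg _ _ _ _ _)))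
  calc P.real (block R) ^ 35 = (P.real (block R) ^ 2 * P.real (block R) ^ 11) *
        (P.real (block R) ^ 11 * P.real (block R) ^ 11) := by ring
    _ ≤ _ := by
      refine mul_le_mul (le_trans ?_ h1) (le_trans ?_ h2) (by positivity) measureReal_nonneg
      · gcongr <;> exact real_leg_ge hP _ _ _ _ _
      · gcongr <;> exact real_leg_ge hP _ _ _ _ _

theorem mul_succ_le_of_lt (R : ℕ) {j m : ℕ} (h : j < m) : (R : ℤ) * j + R ≤ R * m := by
  have : R * (j + 1) ≤ R * m := Nat.mul_le_mul_left _ h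
  exact_mod_cast this

theorem detBy_hook (n R : ℕ) :
    DetBy ((box (24 * R)).map (shift (top n)).toEmbedding) (hook n R) := by
  have hmem : ∀ v : ℤ × ℤ, v.1 + n ∈ Set.Icc (-(24 * R : ℤ)) (24 * R) →
      v.2 - 2 * n ∈ Set.Icc (-(24 * R : ℤ)) (24 * R) →
      v ∈ (box (24 * R)).map (shift (top n)).toEmbedding := by
    rintro v ⟨h1, h2⟩ ⟨h3, h4⟩
    rw [Finset.mem_map]
    refine ⟨(v.1 + n, v.2 - 2 * n), ?_, ?_⟩
    · rw [mem_box]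
      push_cast
      omega
    · simp [shift_apply, top]
  refine ((detBy_leg ?_).inter (detBy_leg ?_)).inter ((detBy_leg ?_).inter (detBy_leg ?_))
  all_goals
    intro j hj v hv
    have hj' := mul_succ_le_of_lt R hj
    have hR0 : 0 ≤ (R : ℤ) * j := by positivity
    push_cast at hj'
    simp only [mem_hexBall] at hv
    refine hmem _ ?_ ?_ <;>
    simp only [legMap_apply, Set.mem_Icc, rot_symm_apply, rotTwo_apply, Equiv.refl_apply] <;>
    omega

theorem reach_hook_outer {n R : ℕ} (hR : 0 < R) (hn : 25 * R ≤ n) {ω : Config}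
    (hω : ω ∈ hook n R) :
    Reach ω (cyl (n + 8 * R)) 0 (-n - 17 * R, 2 * n + R) (top (n + 8 * R)) := by
  have l1 := reach_of_leg (m := 1) (T := cyl (n + 8 * R))
    (fun _ _ h => h) rfl (by simp [top]; ring) hω.1.1 (by
      intro j hj v hv
      simp only [Set.mem_inter_iff, Set.mem_ofPred_eq, mem_hexBall, cyl, top, legMap_apply,
        Prod.ext_iff, Equiv.refl_apply] at hv ⊢
      have : j = 0 ∨ j = 1 := by omega
      rcases this with rfl | rfl <;> push_cast <;> omega)
  have l2 := reach_of_leg (m := 10) (T := cyl (n + 8 * R))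
    rot_symm_adj rfl (by simp [top, rot_symm_apply]; ring) hω.1.2 (by
      intro j hj v hv
      have hj' := mul_succ_le_of_lt R hj
      have hR0 : 0 ≤ (R : ℤ) * j := by positivity
      push_cast at hj'
      have hv := hv.2
      right; right
      simp only [mem_hexBall, legMap_apply, rot_symm_apply] at hv ⊢
      push_cast
      omega)
  have e : (-(n : ℤ) - 17 * R + R * ((10 : ℕ) + 1) * 1, 2 * (n : ℤ) + R + R * ((10 : ℕ) + 1) * 1) =
      (-(n : ℤ) - 6 * R, 2 * (n : ℤ) + 12 * R) := by
    ext <;> push_cast <;> ring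
  have e' : (-(n : ℤ) - 6 * R + R * ((1 : ℕ) + 1) * (-1),
      2 * (n : ℤ) + 12 * R + R * ((1 : ℕ) + 1) * 2) = top (n + 8 * R) := by
    ext <;> simp only [top] <;> push_cast <;> ring
  rw [e] at l2
  rw [e'] at l1
  exact l2.trans l1

theorem reach_hook_inner {n R : ℕ} (hR : 0 < R) {ω : Config} (hω : ω ∈ hook n R) :
    Reach ω {v | (2 * n - 24 * R ≤ v.2 ∧ v.2 + 1 ≤ 2 * n + 16 * R) ∧
      (v.1 + 2 * v.2 ≤ 3 * n - 2 * R ∨ 2 * R ≤ v.1 - v.2 + 3 * n)} 0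
      (-n - 17 * R, 2 * n + R) (-n + 16 * R, 2 * n + R) := by
  have l3 := reach_of_leg (m := 10)
    (T := {v | (2 * n - 24 * R ≤ v.2 ∧ v.2 + 1 ≤ 2 * n + 16 * R) ∧
      (v.1 + 2 * v.2 ≤ 3 * n - 2 * R ∨ 2 * R ≤ v.1 - v.2 + 3 * n)})
    rotTwo_adj rfl
    (by ext <;> simp only [top, rotTwo_apply] <;> ring) hω.2.1 (by
      intro j hj v hv
      have hj' := mul_succ_le_of_lt R hj
      have hR0 : 0 ≤ (R : ℤ) * j := by positivity
      push_cast at hj'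
      have hv := hv.2
      simp only [Set.mem_ofPred_eq, mem_hexBall, legMap_apply, rotTwo_apply] at hv ⊢
      omega)
  have l4 := reach_of_leg (m := 10)
    (T := {v | (2 * n - 24 * R ≤ v.2 ∧ v.2 + 1 ≤ 2 * n + 16 * R) ∧
      (v.1 + 2 * v.2 ≤ 3 * n - 2 * R ∨ 2 * R ≤ v.1 - v.2 + 3 * n)})
    rot_symm_adj rfl (by simp [top, rot_symm_apply]; ring) hω.2.2 (by
      intro j hj v hv
      have hj' := mul_succ_le_of_lt R hj
      have hR0 : 0 ≤ (R : ℤ) * j := by positivity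
      push_cast at hj'
      have hv := hv.2
      simp only [Set.mem_ofPred_eq, mem_hexBall, legMap_apply, rot_symm_apply] at hv ⊢
      omega)
  have e : (-(n : ℤ) - 17 * R + R * ((10 : ℕ) + 1) * 2,
      2 * (n : ℤ) + R + R * ((10 : ℕ) + 1) * (-1)) = (-(n : ℤ) + 5 * R, 2 * (n : ℤ) - 10 * R) := by
    ext <;> push_cast <;> ring
  have e' : (-(n : ℤ) + 5 * R + R * ((10 : ℕ) + 1) * 1,
      2 * (n : ℤ) - 10 * R + R * ((10 : ℕ) + 1) * 1) = (-(n : ℤ) + 16 * R, 2 * (n : ℤ) + R) := by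
    ext <;> push_cast <;> ring
  rw [e] at l3
  rw [e'] at l4
  exact l3.trans l4

/-- A path up to level close to `2n` above the origin can be attached to the hook. -/
theorem reach_of_hook {n R : ℕ} {ρ : ℤ} (hρ : 4 * ρ < R) (hn : 25 * R ≤ n) {ω : Config}
    (hω : ω ∈ hook n R) {K : ℕ} {z : ℤ × ℤ} (hz : 2 * n - ρ ≤ z.2) (hz' : |2 * z.1 + z.2| ≤ ρ)
    (h : Reach ω (strip n) K (0, 0) z) : Reach ω (cyl (n + 8 * R)) K (0, 0) (top (n + 8 * R)) := by
  rw [abs_le] at hz'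
  have hR0 : 0 < R := by omega
  obtain ⟨γ, hγ, hγk⟩ := h
  obtain ⟨w, hw, hwk⟩ := reach_hook_inner hR0 hω
  have hz2 := hγ z (by simp)
  obtain ⟨l, hl⟩ := exists_ray 0 1 (fun a b => by simp [triGraph_adj]) z.1 z.2 (40 * R)
  obtain ⟨x, hxw, hx⟩ := crossing_of_rays w (γ.append l) (2 * n - 24 * R) (2 * n + 16 * R - 1)
    (fun x hx => by have := (hw x hx).1; omega) (by simp only; omega)
    (by push_cast; omega)
    (by
      intro x hx hx2
      rcases (SimpleGraph.Walk.mem_support_append_iff _ _).1 hx with h | h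
      · have := hγ x h
        simp only [mem_strip, Prod.ext_iff] at this hx2
        omega
      · obtain ⟨i, hi, rfl⟩ := hl x h
        simp only [mem_strip, Prod.ext_iff] at hz2 hx2 ⊢
        omega)
    (by
      intro x hx hx2
      rcases (SimpleGraph.Walk.mem_support_append_iff _ _).1 hx with h | h
      · have := hγ x h
        simp only [mem_strip, Prod.ext_iff] at this hx2
        omega
      · obtain ⟨i, hi, rfl⟩ := hl x h
        simp only [mem_strip, Prod.ext_iff] at hz2 hx2 ⊢
        omega)
  have hxγ : x ∈ γ.support := by
    rcases (SimpleGraph.Walk.mem_support_append_iff _ _).1 hx with h | h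
    · exact h
    · exfalso
      obtain ⟨i, hi, rfl⟩ := hl x h
      have := (hw _ hxw).2
      simp only [mem_strip, Prod.ext_iff] at hz2 this
      omega
  have r1 := (Reach.of_mem_support hγ hγk hxγ).1.mono (R' := cyl (n + 8 * R)) (fun y hy => by
    rcases hy with hy | hy
    · exact Or.inl hy
    · right; right
      push_cast
      omega) le_rfl
  have r2 := (Reach.of_mem_support hw hwk hxw).1.mono (R' := cyl (n + 8 * R)) (fun y hy => by
    right; right
    have := hy.1
    push_cast
    omega) le_rfl
  exact (r1.trans r2.symm).trans (reach_hook_outer hR0 hn hω)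

/-! ### The contradiction -/

/-- The point reflection exchanging the origin and `i√3·n`. -/
def pointFlip (n : ℤ) : ℤ × ℤ ≃ ℤ × ℤ where
  toFun v := (-n - v.1, 2 * n - v.2)
  invFun v := (-n - v.1, 2 * n - v.2)
  left_inv v := by ext <;> simp
  right_inv v := by ext <;> simp

theorem pointFlip_apply (n : ℤ) (v : ℤ × ℤ) : pointFlip n v = (-n - v.1, 2 * n - v.2) := rfl

theorem pointFlip_adj (n : ℤ) (u v : ℤ × ℤ) (h : triGraph.Adj u v) :
    triGraph.Adj (pointFlip n u) (pointFlip n v) := by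
  simp only [triGraph_adj, pointFlip_apply] at h ⊢
  omega

theorem Reach.of_pointFlip {ω : Config} {n : ℤ} {R R' : Set (ℤ × ℤ)} {k : ℕ} {u v : ℤ × ℤ}
    (h : Reach ω R k u v) (hR : ∀ z ∈ R, pointFlip n z ∈ R') :
    Reach (fun v => ω (pointFlip n v)) R' k (pointFlip n u) (pointFlip n v) := by
  have e : ∀ v, pointFlip n (pointFlip n v) = v := (pointFlip n).left_inv
  exact Reach.map (ω := fun v => ω (pointFlip n v)) (pointFlip_adj n) (by simpa only [e] using h) hR

theorem exists_reach_of_no_exit {r n k K : ℕ} {W : ℤ} (hr : 2 ≤ r) (hrn : r < n)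
    (hW : 2 * r ≤ W) {ω : Config} (h : Reach ω (cyl n) K (0, 0) (top n))
    (hne : (fun v => ω (pointFlip n v)) ∉
      stripArm r k fun z => z.2 = 2 * r - 1 ∨ W ≤ |2 * z.1 + z.2|) :
    ω ∈ stripArm n (K - k) fun z => 2 * n - (W + 2) ≤ z.2 ∧ |2 * z.1 + z.2| ≤ W + 2 := by
  obtain ⟨a₀, e, i₀, j₀, ha₀, rfl, -, hij₀, h1, h2⟩ := h.first_hit (fun v => v = top n)
    (by simp only [top, Prod.ext_iff]; omega) rfl
  have hadj := ha₀
  simp only [triGraph_adj, top] at hadj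
  obtain ⟨a, b, i, j, hab, hb, hbR, hij, h3, h4⟩ := h1.symm.first_hit
    (fun v => v.2 ≤ 2 * n - 2 * r + 1 ∨ W ≤ |2 * v.1 + v.2|)
    (by rw [le_abs]; omega) (by simp only; omega)
  have ha := h3.right_mem.2
  rw [le_abs] at ha hb
  have hab' := hab
  simp only [triGraph_adj] at hab'
  have hbn : b.2 < 2 * n := by
    have := hbR.1
    have h5 := hbR.2
    simp only [cyl, Set.mem_ofPred_eq, Prod.ext_iff] at this h5
    omega
  refine mem_stripArm.2 ⟨b, ⟨by omega, abs_le.2 ⟨by omega, by omega⟩⟩,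
    h4.symm.mono (fun y hy => ?_) ?_⟩
  · rcases hy.1 with h5 | h5 | h5
    · exact Or.inl h5
    · exact absurd h5 hy.2
    · exact Or.inr h5
  by_contra hcon
  apply hne
  have ht1 := h2.left_time
  have ht2 := siteTime_le_one ω b
  have h5 : Reach ω {y | y = top n ∨ 2 * n - 2 * r < y.2 ∧ y.2 < 2 * n}
      (siteTime ω b + (siteTime ω (top n) + i)) (top n) b := by
    refine Reach.snoc (Reach.cons ha₀.symm (Or.inl rfl) (h3.mono (fun y hy => ?_) le_rfl)) hab ?_
    · have h5 := hy.1.1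
      have h6 := hy.1.2
      have h7 := hy.2
      rw [not_or, le_abs] at h7
      simp only [cyl, Set.mem_ofPred_eq, Prod.ext_iff] at h5 h6 ⊢
      omega
    · right
      omega
  have h6 := (h5.of_pointFlip (n := n) (R' := strip r) fun y hy => by
    simp only [top, strip, Set.mem_ofPred_eq, Prod.ext_iff, pointFlip_apply] at hy ⊢
    omega).mono (l := k) subset_rfl (by omega)
  have e : pointFlip n (top n) = (0, 0) := by
    simp [pointFlip_apply, top]
  rw [e] at h6
  refine mem_stripArm.2 ⟨_, ?_, h6⟩
  simp only [pointFlip_apply, le_abs]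
  omega

theorem real_low_cost_le (hP : IsBernoulliHalf P) {c δ b : ℝ} (hc : 0 < c) (hδ : δ ≤ c / 4)
    {E : Set Config} {r : ℕ} (hE : 1 - b ≤ P.real E)
    (h : ∀ ω ∈ E, ∀ k : ℕ, Reach ω (cyl r) k (0, 0) (top r) → (c - δ) * Real.log r < k) :
    P.real {ω | Reach ω (cyl r) (2 * ⌊c / 8 * Real.log r⌋₊) (0, 0) (top r)} ≤ b := by
  have := hP.1
  refine real_le_of_disjoint (blueInc_reach _ _ _ _).measurableSet hE fun ω hω hω' => ?_
  have h1 := h ω hω _ hω'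
  have hlog := Real.log_natCast_nonneg r
  have h2 : (⌊c / 8 * Real.log r⌋₊ : ℝ) ≤ c / 8 * Real.log r := Nat.floor_le (by positivity)
  push_cast at h1
  nlinarith

theorem real_approach_ge (hP : IsBernoulliHalf P) {r n k K : ℕ} (hr : 40 ≤ r) (hrn : r < n)
    (hV : 1 ≤ (r : ℝ) ^ 13 * P.real (block r))
    (hb : P.real {ω | Reach ω (cyl r) (2 * k) (0, 0) (top r)} ≤ 1 / 10000)
    {E : Set Config} (hE : 1 - 1 / 10000 ≤ P.real E)
    (h : ∀ ω ∈ E, Reach ω (cyl n) K (0, 0) (top n)) :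
    3 / 4 ≤ P.real (stripArm n (K - k) fun z =>
      2 * n - ((r : ℤ) ^ 15 + 2) ≤ z.2 ∧ |2 * z.1 + z.2| ≤ (r : ℤ) ^ 15 + 2) := by
  have := hP.1
  set X := stripArm r k fun z => z.2 = 2 * r - 1 ∨ (r : ℤ) ^ 15 ≤ |2 * z.1 + z.2|
  have hX : P.real X ≤ 1 / 10 := real_exit_le hP hr hV hb
  have hX' := (blueInc_stripArm r k fun z =>
    z.2 = 2 * r - 1 ∨ (r : ℤ) ^ 15 ≤ |2 * z.1 + z.2|).real_preimage hP (pointFlip n)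
  have hW : 2 * (r : ℤ) ≤ (r : ℤ) ^ 15 := by
    have h1 : (r : ℤ) ^ 2 ≤ (r : ℤ) ^ 15 := pow_le_pow_right₀ (by omega) (by norm_num)
    have h2 : (40 : ℤ) ≤ r := by omega
    nlinarith
  have hsub : E ⊆ (stripArm n (K - k) fun z =>
      2 * n - ((r : ℤ) ^ 15 + 2) ≤ z.2 ∧ |2 * z.1 + z.2| ≤ (r : ℤ) ^ 15 + 2) ∪
      {ω : Config | (fun v => ω (pointFlip n v)) ∈ X} := by
    intro ω hω
    by_cases hωX : (fun v => ω (pointFlip n v)) ∈ X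
    · exact Or.inr hωX
    · exact Or.inl (exists_reach_of_no_exit (by omega) hrn hW (h ω hω) hωX)
  have h1 := measureReal_mono (μ := P) hsub (measure_ne_top P _)
  have h2 := measureReal_union_le (μ := P) (stripArm n (K - k) fun z =>
      2 * n - ((r : ℤ) ^ 15 + 2) ≤ z.2 ∧ |2 * z.1 + z.2| ≤ (r : ℤ) ^ 15 + 2)
      {ω : Config | (fun v => ω (pointFlip n v)) ∈ X}
  linarith

theorem disjoint_hook_support {n n' R : ℕ} (hR : 0 < R) (h : n + 50 * R ≤ n') :
    Disjoint ((box (24 * R)).map (shift (top n)).toEmbedding)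
      ((box (24 * R)).map (shift (top n')).toEmbedding) := by
  rw [Finset.disjoint_left]
  intro x hx hx'
  simp only [Finset.mem_map, mem_box, Equiv.toEmbedding_apply, shift_apply, top] at hx hx'
  obtain ⟨u, hu, rfl⟩ := hx
  obtain ⟨v, hv, huv⟩ := hx'
  simp only [Prod.ext_iff] at huv
  push_cast at hu hv huv
  omega

set_option exponentiation.threshold 500 in
theorem not_logLaw (hP : IsBernoulliHalf P) {c : ℝ} (hc : 0 < c) : ¬ LogLaw P c := by
  intro hlaw
  have := hP.1
  obtain ⟨r₀, hr₀⟩ := real_block_ge hP hc hlaw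
  obtain ⟨N, E, hE, hlog⟩ := hlaw (c / 1000000) (by positivity) (1 / 10000) (by norm_num)
  obtain ⟨r, hr, hrlog⟩ : ∃ r ≥ max (max r₀ N) 1000, 10 ≤ c * Real.log r := by
    have h := (Real.tendsto_log_atTop.comp tendsto_natCast_atTop_atTop).eventually
      (eventually_ge_atTop (10 / c))
    obtain ⟨r, hr, hr'⟩ := ((eventually_ge_atTop (max (max r₀ N) 1000)).and h).exists
    refine ⟨r, hr, ?_⟩
    rw [Function.comp, div_le_iff₀ hc] at hr'
    linarith
  have hr1 : r₀ ≤ r := by omega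
  have hr2 : N ≤ r := by omega
  have hr3 : 1000 ≤ r := by omega
  obtain ⟨R, hR⟩ : ∃ R, R = r ^ 16 := ⟨_, rfl⟩
  obtain ⟨M, hM⟩ : ∃ M, M = R ^ 455 := ⟨_, rfl⟩
  have hrR : r ≤ R := hR ▸ Nat.le_self_pow (by norm_num) r
  have hR0 : 0 < R := by omega
  have hM0 : 0 < M := hM ▸ Nat.pow_pos hR0
  have hRM : R ≤ R * M := Nat.le_mul_of_pos_right R hM0
  obtain ⟨k, hk⟩ : ∃ k, k = ⌊c / 8 * Real.log r⌋₊ := ⟨_, rfl⟩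
  have hb := real_low_cost_le hP hc (δ := c / 1000000) (by linarith) hE fun ω hω =>
    (hlog ω hω r hr2).2
  rw [← hk] at hb
  set n : ℕ → ℕ := fun i => 50 * (R * M) + 50 * (R * i) with hn
  set K : ℕ → ℕ := fun i => ⌊(c + c / 1000000) * Real.log (n i)⌋₊ with hK
  have hnN : ∀ i, N ≤ n i := fun i => by simp only [hn]; omega
  have hnR : ∀ i, 25 * R ≤ n i := fun i => by simp only [hn]; omega
  set A : ℕ → Set Config := fun i => stripArm (n i) (K i - k) fun z =>
    2 * n i - ((r : ℤ) ^ 15 + 2) ≤ z.2 ∧ |2 * z.1 + z.2| ≤ (r : ℤ) ^ 15 + 2 with hA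
  have key := real_iUnion_inter_ge hP (A := A) (B := fun i => hook (n i) R)
    (U := fun i => (box (24 * R)).map (shift (top (n i))).toEmbedding) (M := M)
    (Q := P.real (block R) ^ 35) (fun i => blueInc_stripArm _ _ _)
    (fun i _ => real_approach_ge hP (by omega) (by simp only [hn]; omega) (hr₀ r hr1) hb hE
      fun ω hω => (hlog ω hω (n i) (hnN i)).1)
    (fun i => (blueInc_hook _ _).2) (fun i => detBy_hook _ _) (fun i j hij => by
      refine disjoint_hook_support hR0 ?_
      have : R * (i + 1) ≤ R * j := Nat.mul_le_mul_left R hij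
      simp only [hn]
      linarith)
    (fun i => real_hook_ge hP _ _) (by
      have h1 := one_le_pow₀ (hr₀ R (by omega)) (n := 35)
      rw [mul_pow, ← pow_mul] at h1
      rw [hM, Nat.cast_pow]
      exact h1)
  have h1 : P.real (⋃ i ∈ Finset.range M, A i ∩ hook (n i) R) ≤ 1 / 10000 := by
    refine real_le_of_disjoint (BlueInc.iUnion fun i => BlueInc.iUnion fun _ =>
      (blueInc_stripArm _ _ _).inter (blueInc_hook _ _)).measurableSet hE fun ω hω hω' => ?_
    simp only [Set.mem_iUnion, Finset.mem_range, exists_prop] at hω'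
    obtain ⟨i, hi, hωA, hωB⟩ := hω'
    obtain ⟨z, ⟨hz, hz'⟩, h⟩ := mem_stripArm.1 hωA
    have hρ : 4 * ((r : ℤ) ^ 15 + 2) < R := by
      have h2 : (1000 : ℤ) * (r : ℤ) ^ 15 ≤ r * (r : ℤ) ^ 15 := by
        gcongr
        exact_mod_cast hr3
      have h3 : (1 : ℤ) ≤ (r : ℤ) ^ 15 := one_le_pow₀ (by omega)
      have h4 : (R : ℤ) = r * (r : ℤ) ^ 15 := by
        rw [hR]
        push_cast
        ring
      omega
    have h2 := (hlog ω hω (n i + 8 * R) (by have := hnN i; omega)).2 _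
      (reach_of_hook hρ (hnR i) hωB hz hz' h)
    have hn0 : 0 < n i := by have := hnR i; omega
    have hn0' : (0 : ℝ) < n i := by exact_mod_cast hn0
    have h3 : Real.log (n i) ≤ Real.log (n i + 8 * R : ℕ) :=
      Real.log_le_log hn0' (by push_cast; linarith [(Nat.cast_nonneg R : (0 : ℝ) ≤ R)])
    have h4 : Real.log (n i) ≤ 7297 * Real.log r := by
      have h5 : n i ≤ r ^ 7297 := by
        have h6 : R * i ≤ R * M := Nat.mul_le_mul_left R hi.le
        have h7 : R * M = r ^ 7296 := by
          rw [hM, hR, ← pow_mul, ← pow_add]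
        have h8 : 100 * (R * M) ≤ r * (R * M) := Nat.mul_le_mul_right _ (by omega)
        calc n i ≤ r * (R * M) := by simp only [hn]; omega
          _ = r ^ 7297 := by rw [h7, ← pow_succ']
      calc Real.log (n i) ≤ Real.log ((r : ℝ) ^ 7297) :=
            Real.log_le_log hn0' (by exact_mod_cast h5)
        _ = 7297 * Real.log r := by
          rw [Real.log_pow]
          norm_num
    have h5 : 0 ≤ Real.log (n i) := Real.log_natCast_nonneg _
    have h6 : (K i : ℝ) ≤ (c + c / 1000000) * Real.log (n i) := Nat.floor_le (by positivity)
    have h7 : c / 8 * Real.log r < k + 1 := hk ▸ Nat.lt_floor_add_one _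
    have h8 : (c - c / 1000000) * Real.log (n i) ≤
        (c - c / 1000000) * Real.log (n i + 8 * R : ℕ) := by
      gcongr
      linarith
    have h9 : c * Real.log (n i) ≤ c * (7297 * Real.log r) := by gcongr
    have h10 : 0 ≤ c * Real.log (n i) := by positivity
    rcases le_total k (K i) with hkK | hkK
    · rw [Nat.cast_sub hkK] at h2
      linarith
    · rw [Nat.sub_eq_zero_of_le hkK, Nat.cast_zero] at h2
      linarith
  linarith

/-- The convergence `t_{0,n} / log n → √3/π` does NOT hold almost surely. -/
theorem tCyl_not_as (P : Measure Config) (hP : IsBernoulliHalf P) :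
    P {ω : Config | Tendsto (fun n : ℕ => (tCyl ω n : ℝ) / Real.log n) atTop
        (𝓝 (Real.sqrt 3 / Real.pi))} < 1 := by
  have := hP.1
  by_contra h
  exact not_logLaw hP (div_pos (by positivity) Real.pi_pos)
    (logLaw_of_tendsto hP (le_antisymm prob_le_one (not_lt.1 h)))
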